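/- arXiv:1708.06295 — 2 statements merged into one kernel-verified Lean document; each statement's English description precedes it below -/
import Mathlib

section
/- Let CS be a constant specification and Γ ⊆ Form^Ag. Then the following are equivalent: (i) Γ is CS-consistent; (ii) Γ is satisfiable in Mod_CS(𝓒^Ag_mixsucc), the class of CS-normal jstit models based on mixed successor stit frames for Ag; (iii) Γ is satisfiable in Mod↓_CS(𝓒^Ag_mixsucc), the subclass of unirelational such models. -/
/-! Preliminaries: temporal frames, stit frames, jstit frames, the language of
JA-STIT, jstit models, satisfaction, and the Hilbert system Σ_D(CS). -/

/-- A temporal frame: a nonempty set of moments with a partial order satisfying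
historical connection and no backward branching. -/
structure TemporalFrame (Mo : Type) : Type where
  le : Mo → Mo → Prop
  le_refl : ∀ m, le m m
  le_antisymm : ∀ {m m'}, le m m' → le m' m → m = m'
  le_trans : ∀ {m1 m2 m3}, le m1 m2 → le m2 m3 → le m1 m3
  nonempty : Nonempty Mo
  hist_conn : ∀ m m1, ∃ m2, le m2 m ∧ le m2 m1
  no_backward : ∀ m m1 m2, le m1 m → le m2 m → le m1 m2 ∨ le m2 m1

namespace TemporalFrame

variable {Mo : Type} (T : TemporalFrame Mo)

/-- The strict companion of the temporal order. -/
def lt (m m' : Mo) : Prop := T.le m m' ∧ m ≠ m'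

/-- A history is a maximal chain of moments w.r.t. the temporal order. -/
def IsHistory (h : Set Mo) : Prop :=
  IsChain T.le h ∧ ∀ h' : Set Mo, IsChain T.le h' → h ⊆ h' → h' = h

/-- `T.H m` is the set of histories passing through the moment `m`. -/
def H (m : Mo) : Set (Set Mo) := { h | T.IsHistory h ∧ m ∈ h }

/-- Histories `h` and `g` are undivided at `m`. -/
def Undiv (m : Mo) (h g : Set Mo) : Prop := ∃ m', T.lt m m' ∧ m' ∈ h ∧ m' ∈ g

/-- `m'` is an immediate successor of `m`. -/
def Next (m m' : Mo) : Prop := T.lt m m' ∧ ∀ m'', T.lt m'' m' → T.le m'' m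

/-- Mixed successor condition on (the temporal part of) a frame. -/
def MixSucc : Prop :=
  ∀ m m1 : Mo,
    (T.lt m m1 → ∃ m2, T.le m2 m1 ∧ T.Next m m2) ∨
    (∀ h ∈ T.H m, ∀ g ∈ T.H m, T.Undiv m h g)

end TemporalFrame

/-- A stit frame for an agent community `Ag`: a temporal frame together with a choice
function assigning to each moment and agent a partition of the histories through that
moment, subject to no choice between undivided histories and independence of agents. -/
structure StitFrame (Mo : Type) (Ag : Type) extends TemporalFrame Mo where
  choice : Mo → Ag → Set (Set (Set Mo))
  choice_cell_nonempty : ∀ m j C, C ∈ choice m j → C.Nonempty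
  choice_cell_sub : ∀ m j C, C ∈ choice m j → C ⊆ toTemporalFrame.H m
  choice_cover : ∀ m j h, h ∈ toTemporalFrame.H m → ∃ C ∈ choice m j, h ∈ C
  choice_disjoint : ∀ m j C C', C ∈ choice m j → C' ∈ choice m j →
    (C ∩ C').Nonempty → C = C'
  no_choice_undiv : ∀ m j h h', h ∈ toTemporalFrame.H m → h' ∈ toTemporalFrame.H m →
    toTemporalFrame.Undiv m h h' → ∀ C ∈ choice m j, h ∈ C → h' ∈ C
  independence : ∀ m (f : Ag → Set (Set Mo)), (∀ j, f j ∈ choice m j) →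
    (⋂ j, f j).Nonempty

/-- A justification stit (jstit) frame for `Ag`: a stit frame together with two
epistemic preorders `R ⊆ R_e`, with the temporal order included in `R`. -/
structure JstitFrame (Mo : Type) (Ag : Type) extends StitFrame Mo Ag where
  R : Mo → Mo → Prop
  Re : Mo → Mo → Prop
  R_refl : ∀ m, R m m
  R_trans : ∀ {m1 m2 m3}, R m1 m2 → R m2 m3 → R m1 m3
  Re_refl : ∀ m, Re m m
  Re_trans : ∀ {m1 m2 m3}, Re m1 m2 → Re m2 m3 → Re m1 m3
  R_sub_Re : ∀ {m m'}, R m m' → Re m m'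
  le_sub_R : ∀ {m m'}, le m m' → R m m'

namespace JstitFrame

variable {Mo : Type} {Ag : Type} (F : JstitFrame Mo Ag)

/-- The family `Θ_m` of subsets of the set of moments associated with a moment `m`. -/
def Theta (m : Mo) : Set (Set Mo) :=
  { S | m ∈ S ∧
    (∀ m1 m2, m1 ∈ S → F.Re m1 m2 → m2 ∈ S) ∧
    (∀ m1, (∀ h ∈ F.toTemporalFrame.H m1,
        ∃ m2 ∈ h, F.toTemporalFrame.Next m1 m2 ∧ m2 ∈ S) → m1 ∈ S) ∧
    (∀ m1, m1 ∈ S →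
      (∀ m2, F.toTemporalFrame.lt m2 m1 →
        ∃ m3, F.toTemporalFrame.lt m2 m3 ∧ F.toTemporalFrame.lt m3 m1) →
      ∃ m4, F.toTemporalFrame.lt m4 m1 ∧ m4 ∈ S) }

/-- A jstit frame is unirelational iff `R_e ⊆ R`. -/
def Unirelational : Prop := ∀ m m', F.Re m m' → F.R m m'

/-- Regularity of a jstit frame. -/
def Regular : Prop :=
  ∀ m m1 : Mo, F.toTemporalFrame.lt m m1 →
    (∃ S : Set Mo,
      (∀ m0, F.toTemporalFrame.lt m m0 → F.le m0 m1 → S ∈ F.Theta m0) ∧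
      m ∉ S ∧
      ∃ h' ∈ F.toTemporalFrame.H m,
        (∀ g ∈ F.toTemporalFrame.H m1, ¬ F.toTemporalFrame.Undiv m h' g) ∧
        (∀ m' ∈ h', F.toTemporalFrame.Next m m' → m' ∉ S)) →
    ∃ m2, F.le m2 m1 ∧ F.toTemporalFrame.Next m m2

end JstitFrame

/-- Proof polynomials over proof variables `PVar` and proof constants `PConst`. -/
inductive Pol (PVar PConst : Type) : Type
  | var : PVar → Pol PVar PConst
  | const : PConst → Pol PVar PConst
  | plus : Pol PVar PConst → Pol PVar PConst → Pol PVar PConst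
  | times : Pol PVar PConst → Pol PVar PConst → Pol PVar PConst
  | bang : Pol PVar PConst → Pol PVar PConst

/-- Formulas of JA-STIT. -/
inductive Form (Ag PVar PConst PropVar : Type) : Type
  | pv : PropVar → Form Ag PVar PConst PropVar
  | and : Form Ag PVar PConst PropVar → Form Ag PVar PConst PropVar →
      Form Ag PVar PConst PropVar
  | neg : Form Ag PVar PConst PropVar → Form Ag PVar PConst PropVar
  | stit : Ag → Form Ag PVar PConst PropVar → Form Ag PVar PConst PropVar
  | box : Form Ag PVar PConst PropVar → Form Ag PVar PConst PropVar
  | proves : Pol PVar PConst → Form Ag PVar PConst PropVar → Form Ag PVar PConst PropVar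
  | know : Form Ag PVar PConst PropVar → Form Ag PVar PConst PropVar
  | ann : Pol PVar PConst → Form Ag PVar PConst PropVar

namespace Form

variable {Ag PVar PConst PropVar : Type}

/-- Implication, defined as usual from `¬` and `∧`. -/
def imp (A B : Form Ag PVar PConst PropVar) : Form Ag PVar PConst PropVar :=
  neg (and A (neg B))

/-- Disjunction, defined as usual. -/
def or (A B : Form Ag PVar PConst PropVar) : Form Ag PVar PConst PropVar :=
  neg (and (neg A) (neg B))

/-- The dual `◇` of the historical necessity modality. -/
def dia (A : Form Ag PVar PConst PropVar) : Form Ag PVar PConst PropVar :=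
  neg (box (neg A))

/-- Falsum, defined as usual. -/
def bot [Inhabited PropVar] : Form Ag PVar PConst PropVar :=
  and (pv default) (neg (pv default))

end Form

/-- Conjunction of a nonempty list of formulas (head plus tail). -/
def andList {Ag PVar PConst PropVar : Type} :
    Form Ag PVar PConst PropVar → List (Form Ag PVar PConst PropVar) →
      Form Ag PVar PConst PropVar
  | A, [] => A
  | A, B :: L => Form.and A (andList B L)

/-- Disjunction of a list of formulas. -/
def bigOr {Ag PVar PConst PropVar : Type} [Inhabited PropVar] :
    List (Form Ag PVar PConst PropVar) → Form Ag PVar PConst PropVar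
  | [] => Form.bot
  | [A] => A
  | A :: B :: L => Form.or A (bigOr (B :: L))

/-- A classical propositional tautology: a formula true under every Boolean valuation
commuting with `∧` and `¬` (all other formulas being treated as atoms). -/
def Tautology {Ag PVar PConst PropVar : Type} (A : Form Ag PVar PConst PropVar) : Prop :=
  ∀ v : Form Ag PVar PConst PropVar → Bool,
    (∀ B C, v (Form.and B C) = (v B && v C)) →
    (∀ B, v (Form.neg B) = !v B) →
    v A = true

/-- The axiom schemes (A0)–(A9) of Σ_D. -/
inductive Ax {Ag PVar PConst PropVar : Type} : Form Ag PVar PConst PropVar → Prop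
  -- (A0) classical propositional tautologies
  | a0 {A} : Tautology A → Ax A
  -- (A1) S5 axioms for □
  | boxK {A B} : Ax (Form.imp (Form.box (Form.imp A B))
      (Form.imp (Form.box A) (Form.box B)))
  | boxT {A} : Ax (Form.imp (Form.box A) A)
  | box4 {A} : Ax (Form.imp (Form.box A) (Form.box (Form.box A)))
  | box5 {A} : Ax (Form.imp (Form.neg (Form.box A)) (Form.box (Form.neg (Form.box A))))
  -- (A1) S5 axioms for each [j]
  | stitK {j : Ag} {A B} : Ax (Form.imp (Form.stit j (Form.imp A B))
      (Form.imp (Form.stit j A) (Form.stit j B)))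
  | stitT {j : Ag} {A} : Ax (Form.imp (Form.stit j A) A)
  | stit4 {j : Ag} {A} : Ax (Form.imp (Form.stit j A) (Form.stit j (Form.stit j A)))
  | stit5 {j : Ag} {A} : Ax (Form.imp (Form.neg (Form.stit j A))
      (Form.stit j (Form.neg (Form.stit j A))))
  -- (A2)
  | a2 {j : Ag} {A} : Ax (Form.imp (Form.box A) (Form.stit j A))
  -- (A3), for pairwise distinct agents
  | a3 {p : Ag × Form Ag PVar PConst PropVar} {L : List (Ag × Form Ag PVar PConst PropVar)} :
      (((p :: L).map Prod.fst).Nodup) →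
      Ax (Form.imp
        (andList (Form.dia (Form.stit p.1 p.2)) (L.map fun q => Form.dia (Form.stit q.1 q.2)))
        (Form.dia (andList (Form.stit p.1 p.2) (L.map fun q => Form.stit q.1 q.2))))
  -- (A4)
  | a4 {s t : Pol PVar PConst} {A B} : Ax (Form.imp (Form.proves s (Form.imp A B))
      (Form.imp (Form.proves t A) (Form.proves (Pol.times s t) B)))
  -- (A5)
  | a5 {t : Pol PVar PConst} {A} : Ax (Form.imp (Form.proves t A)
      (Form.and (Form.proves (Pol.bang t) (Form.proves t A)) (Form.know A)))
  -- (A6)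
  | a6 {s t : Pol PVar PConst} {A} : Ax (Form.imp
      (Form.or (Form.proves s A) (Form.proves t A)) (Form.proves (Pol.plus s t) A))
  -- (A7) S4 axioms for K
  | knowK {A B} : Ax (Form.imp (Form.know (Form.imp A B))
      (Form.imp (Form.know A) (Form.know B)))
  | knowT {A} : Ax (Form.imp (Form.know A) A)
  | know4 {A} : Ax (Form.imp (Form.know A) (Form.know (Form.know A)))
  -- (A8)
  | a8 {A} : Ax (Form.imp (Form.know A) (Form.box (Form.know (Form.box A))))
  -- (A9)
  | a9 {t : Pol PVar PConst} : Ax (Form.imp (Form.box (Form.ann t))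
      (Form.know (Form.box (Form.ann t))))

/-- Iterated prefixes `c_n : … : c_1 : A` of instances `A` of the axiom schemes. -/
inductive ConstIter {Ag PVar PConst PropVar : Type} : Form Ag PVar PConst PropVar → Prop
  | base {c : PConst} {A} : Ax A → ConstIter (Form.proves (Pol.const c) A)
  | step {c : PConst} {B} : ConstIter B → ConstIter (Form.proves (Pol.const c) B)

/-- A constant specification: a set of formulas of the form `c_n : … : c_1 : A` with `A`
an instance of (A0)–(A9), closed under deleting the outermost constant. -/
def IsConstSpec {Ag PVar PConst PropVar : Type}
    (CS : Set (Form Ag PVar PConst PropVar)) : Prop :=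
  (∀ B ∈ CS, ConstIter B) ∧
  ∀ (c c' : PConst) (B : Form Ag PVar PConst PropVar),
    Form.proves (Pol.const c) (Form.proves (Pol.const c') B) ∈ CS →
    Form.proves (Pol.const c') B ∈ CS

/-- Provability in Σ_D(CS): axioms (A0)–(A9), modus ponens (R1), K-necessitation (R2),
the rule (R_D) and the rule (R_CS). -/
inductive Proves {Ag PVar PConst PropVar : Type} [Inhabited PropVar]
    (CS : Set (Form Ag PVar PConst PropVar)) : Form Ag PVar PConst PropVar → Prop
  | ax {A} : Ax A → Proves CS A
  | mp {A B} : Proves CS (Form.imp A B) → Proves CS A → Proves CS B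
  | nec {A} : Proves CS A → Proves CS (Form.know A)
  | rd {A : Form Ag PVar PConst PropVar} {ts ss : List (Pol PVar PConst)}
      (hne : ts ++ ss ≠ []) :
      Proves CS (Form.imp (Form.know A)
        (bigOr ((ts.map fun t => Form.neg (Form.box (Form.ann t))) ++
                (ss.map fun s => Form.box (Form.ann s))))) →
      Proves CS (Form.imp (Form.know A)
        (bigOr ((ts.map fun t => Form.neg (Form.ann t)) ++
                (ss.map fun s => Form.ann s))))
  | rcs {B} : B ∈ CS → Proves CS B

/-- Γ is consistent in Σ_D(CS): no finite nonempty conjunction of members of Γ provably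
implies falsum. -/
def CSConsistent {Ag PVar PConst PropVar : Type} [Inhabited PropVar]
    (CS Γ : Set (Form Ag PVar PConst PropVar)) : Prop :=
  ¬ ∃ (A : Form Ag PVar PConst PropVar) (L : List (Form Ag PVar PConst PropVar)),
      A ∈ Γ ∧ (∀ B ∈ L, B ∈ Γ) ∧ Proves CS (Form.imp (andList A L) Form.bot)

/-- A jstit model for `Ag`: a jstit frame together with `Act`, an admissible evidence
function `E` and an evaluation `V`, subject to the semantical constraints. -/
structure JstitModel (Mo : Type) (Ag PVar PConst PropVar : Type)
    extends JstitFrame Mo Ag where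
  act : Mo → Set Mo → Set (Pol PVar PConst)
  ev : Mo → Pol PVar PConst → Set (Form Ag PVar PConst PropVar)
  val : PropVar → Set (Mo × Set Mo)
  -- monotonicity of evidence
  ev_mono : ∀ m m' t, Re m m' → ev m t ⊆ ev m' t
  -- evidence closure properties
  ev_app : ∀ m s t A B, Form.imp A B ∈ ev m s → A ∈ ev m t → B ∈ ev m (Pol.times s t)
  ev_sum_left : ∀ m s t, ev m s ⊆ ev m (Pol.plus s t)
  ev_sum_right : ∀ m s t, ev m t ⊆ ev m (Pol.plus s t)
  ev_bang : ∀ m t A, A ∈ ev m t → Form.proves t A ∈ ev m (Pol.bang t)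
  -- expansion of presented proofs
  expansion : ∀ m m' h, toTemporalFrame.lt m' m → h ∈ toTemporalFrame.H m →
    act m' h ⊆ act m h
  -- no new proofs guaranteed
  no_new : ∀ m t, (∀ h ∈ toTemporalFrame.H m, t ∈ act m h) →
    ∃ m' h, toTemporalFrame.lt m' m ∧ h ∈ toTemporalFrame.H m ∧ t ∈ act m' h
  -- presenting a new proof makes histories divide
  divide : ∀ m h h', h ∈ toTemporalFrame.H m → h' ∈ toTemporalFrame.H m →
    toTemporalFrame.Undiv m h h' → act m h = act m h'
  -- presented proofs are epistemically transparent
  transparent : ∀ m m' t, Re m m' → (∀ h ∈ toTemporalFrame.H m, t ∈ act m h) →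
    ∀ h' ∈ toTemporalFrame.H m', t ∈ act m' h'

namespace JstitModel

variable {Mo Ag PVar PConst PropVar : Type}

/-- `Act_m`, the set of proofs presented at `m` under every history through `m`. -/
def ActM (M : JstitModel Mo Ag PVar PConst PropVar) (m : Mo) : Set (Pol PVar PConst) :=
  { t | ∀ h ∈ M.toTemporalFrame.H m, t ∈ M.act m h }

/-- The satisfaction relation for jstit models. -/
def Sat (M : JstitModel Mo Ag PVar PConst PropVar) :
    Form Ag PVar PConst PropVar → Mo → Set Mo → Prop
  | Form.pv p, m, h => (m, h) ∈ M.val p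
  | Form.and A B, m, h => M.Sat A m h ∧ M.Sat B m h
  | Form.neg A, m, h => ¬ M.Sat A m h
  | Form.stit j A, m, h => ∀ h' C, C ∈ M.choice m j → h ∈ C → h' ∈ C → M.Sat A m h'
  | Form.box A, m, _ => ∀ h' ∈ M.toTemporalFrame.H m, M.Sat A m h'
  | Form.know A, m, _ => ∀ m' h', M.R m m' → h' ∈ M.toTemporalFrame.H m' → M.Sat A m' h'
  | Form.proves t A, m, _ => A ∈ M.ev m t ∧
      ∀ m' h', M.Re m m' → h' ∈ M.toTemporalFrame.H m' → M.Sat A m' h'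
  | Form.ann t, m, h => t ∈ M.act m h

/-- Validity of a formula in a jstit model. -/
def Valid (M : JstitModel Mo Ag PVar PConst PropVar)
    (A : Form Ag PVar PConst PropVar) : Prop :=
  ∀ m h, h ∈ M.toTemporalFrame.H m → M.Sat A m h

end JstitModel

/-- CS-normality of a jstit model. -/
def CSNormal {Mo Ag PVar PConst PropVar : Type}
    (CS : Set (Form Ag PVar PConst PropVar))
    (M : JstitModel Mo Ag PVar PConst PropVar) : Prop :=
  ∀ (c : PConst) (m : Mo) (A : Form Ag PVar PConst PropVar),
    Form.proves (Pol.const c) A ∈ CS → A ∈ M.ev m (Pol.const c)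

namespace JS

section Sound

variable {Mo Ag PVar PConst PropVar : Type}

theorem hist_down (T : TemporalFrame Mo) {h : Set Mo} (hh : T.IsHistory h) {m m' : Mo}
    (hm : m ∈ h) (hle : T.le m' m) : m' ∈ h := by
  have hc : IsChain T.le (insert m' h) := by
    refine hh.1.insert ?_
    intro b hb _
    rcases eq_or_ne m b with rfl | hne
    · exact Or.inl hle
    · rcases hh.1 hm hb hne with h1 | h1
      · exact Or.inl (T.le_trans hle h1)
      · exact T.no_backward m m' b hle h1
  have := hh.2 _ hc (Set.subset_insert _ _)
  rw [← this]
  exact Set.mem_insert _ _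

theorem hist_cmp (T : TemporalFrame Mo) {h : Set Mo} (hh : T.IsHistory h) {m m' : Mo}
    (hm : m ∈ h) (hm' : m' ∈ h) : T.le m m' ∨ T.le m' m := by
  rcases eq_or_ne m m' with rfl | hne
  · exact Or.inl (T.le_refl _)
  · exact hh.1 hm hm' hne

theorem exists_hist (T : TemporalFrame Mo) (m : Mo) : ∃ h, h ∈ T.H m := by
  obtain ⟨M, hM, hs⟩ := (IsChain.singleton (r := T.le) (a := m)).exists_maxChain
  refine ⟨M, ⟨hM.1, fun h' hc hsub => (hM.2 hc hsub).symm⟩, hs rfl⟩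

variable (M : JstitModel Mo Ag PVar PConst PropVar)

theorem sat_imp (A B : Form Ag PVar PConst PropVar) (m h) :
    M.Sat (Form.imp A B) m h ↔ (M.Sat A m h → M.Sat B m h) := by
  simp [Form.imp, JstitModel.Sat]

theorem sat_or (A B : Form Ag PVar PConst PropVar) (m h) :
    M.Sat (Form.or A B) m h ↔ (M.Sat A m h ∨ M.Sat B m h) := by
  simp [Form.or, JstitModel.Sat]; tauto

theorem sat_bot [Inhabited PropVar] (m h) :
    ¬ M.Sat (Form.bot : Form Ag PVar PConst PropVar) m h := by
  simp [Form.bot, JstitModel.Sat]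

theorem sat_dia (A : Form Ag PVar PConst PropVar) (m h) :
    M.Sat (Form.dia A) m h ↔ ∃ h' ∈ M.toTemporalFrame.H m, M.Sat A m h' := by
  simp [Form.dia, JstitModel.Sat]

theorem sat_andList (L : List (Form Ag PVar PConst PropVar)) : ∀ (A) (m h),
    M.Sat (andList A L) m h ↔ ∀ B ∈ A :: L, M.Sat B m h := by
  induction L with
  | nil => intro A m h; simp [andList]
  | cons C L ih => intro A m h; simp [andList, JstitModel.Sat, ih]

theorem sat_bigOr [Inhabited PropVar] (L : List (Form Ag PVar PConst PropVar)) (m h) :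
    M.Sat (bigOr L) m h ↔ ∃ B ∈ L, M.Sat B m h := by
  induction L with
  | nil => simp [bigOr, sat_bot]
  | cons C L ih =>
    cases L with
    | nil => simp [bigOr]
    | cons D L => simp only [bigOr, sat_or, ih]; simp

theorem sat_stit_iff (j : Ag) (A : Form Ag PVar PConst PropVar) (m h C)
    (hC : C ∈ M.choice m j) (hh : h ∈ C) :
    M.Sat (Form.stit j A) m h ↔ ∀ g ∈ C, M.Sat A m g := by
  simp only [JstitModel.Sat]
  constructor
  · intro H g hg
    exact H g C hC hh hg
  · intro H h' C' hC' hh' hg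
    have : C' = C := M.choice_disjoint m j C' C hC' hC ⟨h, hh', hh⟩
    subst this
    exact H h' hg

theorem ax_sound {A : Form Ag PVar PConst PropVar} (hA : Ax A) : M.Valid A := by
  classical
  intro m h hh
  cases hA with
  | a0 hT =>
    have := hT (fun B => decide (M.Sat B m h)) (by
        intro B C; by_cases h1 : M.Sat B m h <;> by_cases h2 : M.Sat C m h <;>
          simp [JstitModel.Sat, h1, h2])
      (by intro B; by_cases h1 : M.Sat B m h <;> simp [JstitModel.Sat, h1])
    simpa using this
  | boxK => simp only [sat_imp, JstitModel.Sat]; intro a b g hg; exact a g hg (b g hg)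
  | boxT => simp only [sat_imp, JstitModel.Sat]; intro a; exact a h hh
  | box4 => simp only [sat_imp, JstitModel.Sat]; intro a _ _; exact a
  | box5 => simp only [sat_imp, JstitModel.Sat]; intro a _ _; exact a
  | @stitK j A B =>
    obtain ⟨C, hC, hhC⟩ := M.choice_cover m j h hh
    simp only [sat_imp, sat_stit_iff M j _ m h C hC hhC]
    intro a b g hg; exact a g hg (b g hg)
  | @stitT j A =>
    obtain ⟨C, hC, hhC⟩ := M.choice_cover m j h hh
    simp only [sat_imp, sat_stit_iff M j _ m h C hC hhC]
    intro a; exact a h hhC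
  | @stit4 j A =>
    obtain ⟨C, hC, hhC⟩ := M.choice_cover m j h hh
    simp only [sat_imp, sat_stit_iff M j _ m h C hC hhC]
    intro a g hg; rw [sat_stit_iff M j _ m g C hC hg]; exact a
  | @stit5 j A =>
    obtain ⟨C, hC, hhC⟩ := M.choice_cover m j h hh
    rw [sat_imp, sat_stit_iff M j _ m h C hC hhC, JstitModel.Sat,
      sat_stit_iff M j _ m h C hC hhC]
    intro a g hg; rw [JstitModel.Sat, sat_stit_iff M j _ m g C hC hg]; exact a
  | @a2 j A =>
    obtain ⟨C, hC, hhC⟩ := M.choice_cover m j h hh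
    rw [sat_imp, sat_stit_iff M j _ m h C hC hhC, JstitModel.Sat]
    intro a g hg; exact a g (M.choice_cell_sub m j C hC hg)
  | @a3 p L hnd =>
    rw [sat_imp, sat_andList, sat_dia]
    intro H
    have key : ∀ j, ∃ C ∈ M.choice m j, ∀ q ∈ p :: L, q.1 = j →
        ∀ g ∈ C, M.Sat (Form.stit q.1 q.2) m g := by
      intro j
      by_cases hq : ∃ q ∈ p :: L, q.1 = j
      · obtain ⟨q, hq, rfl⟩ := hq
        have : M.Sat (Form.dia (Form.stit q.1 q.2)) m h := by
          apply H
          have := List.mem_map_of_mem (f := fun q : Ag × Form Ag PVar PConst PropVar =>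
            Form.dia (Form.stit q.1 q.2)) hq
          simpa using this
        rw [sat_dia] at this
        obtain ⟨g, hg, hs⟩ := this
        obtain ⟨C, hC, hgC⟩ := M.choice_cover m q.1 g hg
        refine ⟨C, hC, ?_⟩
        intro q' hq' he g' hg'
        have := List.inj_on_of_nodup_map hnd hq' hq he
        subst this
        rw [sat_stit_iff M _ _ m g C hC hgC] at hs
        rw [sat_stit_iff M _ _ m g' C hC hg']
        exact hs
      · obtain ⟨C, hC, hgC⟩ := M.choice_cover m j h hh
        exact ⟨C, hC, fun q hq' he => absurd ⟨q, hq', he⟩ hq⟩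
    choose f hf hf2 using key
    obtain ⟨g, hg⟩ := M.independence m f hf
    rw [Set.mem_iInter] at hg
    refine ⟨g, M.choice_cell_sub m p.1 _ (hf _) (hg _), ?_⟩
    rw [sat_andList]
    intro B hB
    have : B ∈ (p :: L).map (fun q => Form.stit q.1 q.2) := by simpa using hB
    obtain ⟨q, hq, rfl⟩ := List.mem_map.1 this
    exact hf2 q.1 q hq rfl g (hg _)
  | a4 =>
    simp only [sat_imp, JstitModel.Sat]
    rintro ⟨a, b⟩ ⟨c, d⟩
    exact ⟨M.ev_app _ _ _ _ _ a c, fun m' h' hr hh' => b m' h' hr hh' (d m' h' hr hh')⟩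
  | a5 =>
    simp only [sat_imp, JstitModel.Sat]
    rintro ⟨a, b⟩
    exact ⟨⟨M.ev_bang _ _ _ a, fun m' h' hr hh' => ⟨M.ev_mono _ _ _ hr a,
      fun m'' h'' hr' hh'' => b _ _ (M.Re_trans hr hr') hh''⟩⟩,
      fun m' h' hr hh' => b _ _ (M.R_sub_Re hr) hh'⟩
  | a6 =>
    simp only [sat_imp, sat_or, JstitModel.Sat]
    rintro (⟨a, b⟩ | ⟨a, b⟩)
    · exact ⟨M.ev_sum_left _ _ _ a, b⟩
    · exact ⟨M.ev_sum_right _ _ _ a, b⟩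
  | knowK => simp only [sat_imp, JstitModel.Sat]; intro a b g k hg hk; exact a g k hg hk (b g k hg hk)
  | knowT => simp only [sat_imp, JstitModel.Sat]; intro a; exact a m h (M.R_refl m) hh
  | know4 =>
    simp only [sat_imp, JstitModel.Sat]
    intro a m1 _ hr _ m2 h2 hr2 hh2; exact a _ _ (M.R_trans hr hr2) hh2
  | a8 =>
    simp only [sat_imp, JstitModel.Sat]
    intro a _ _ m1 _ hr _ h2 hh2; exact a _ _ hr hh2
  | a9 =>
    simp only [sat_imp, JstitModel.Sat]
    intro a m1 _ hr _ h2 hh2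
    exact M.transparent m m1 _ (M.R_sub_Re hr) a _ hh2

theorem cs_sound [Inhabited PropVar] {CS : Set (Form Ag PVar PConst PropVar)}
    (hCS : IsConstSpec CS) (hN : CSNormal CS M) {B : Form Ag PVar PConst PropVar}
    (hc : ConstIter B) : B ∈ CS → M.Valid B := by
  induction hc with
  | @base c A hA =>
    intro hB m h hh
    exact ⟨hN _ _ _ hB, fun m' h' _ hh' => ax_sound M hA m' h' hh'⟩
  | @step c B hB ih =>
    intro hBB m h hh
    refine ⟨hN _ _ _ hBB, fun m' h' _ hh' => ih ?_ m' h' hh'⟩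
    cases hB with
    | base => exact hCS.2 _ _ _ hBB
    | step => exact hCS.2 _ _ _ hBB

theorem rd_moment (hmix : M.toTemporalFrame.MixSucc) (m h) (hh : h ∈ M.toTemporalFrame.H m) :
    ∃ m' , M.le m m' ∧ ∃ h' ∈ M.toTemporalFrame.H m', ∀ t,
      t ∈ M.act m h ↔ ∀ g ∈ M.toTemporalFrame.H m', t ∈ M.act m' g := by
  by_cases hund : ∀ h ∈ M.toTemporalFrame.H m, ∀ g ∈ M.toTemporalFrame.H m,
      M.toTemporalFrame.Undiv m h g
  · refine ⟨m, M.le_refl m, h, hh, fun t => ⟨fun ht g hg => ?_, fun H => H h hh⟩⟩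
    rw [← M.divide m h g hh hg (hund h hh g hg)]
    exact ht
  by_cases hmax : ∃ m1 ∈ h, M.toTemporalFrame.lt m m1
  · obtain ⟨m1, hm1, hlt⟩ := hmax
    obtain ⟨m2, hle, hnext⟩ := (hmix m m1).resolve_right hund hlt
    have hm2 : m2 ∈ h := hist_down _ hh.1 hm1 hle
    have hu : ∀ g ∈ M.toTemporalFrame.H m2, g ∈ M.toTemporalFrame.H m ∧ M.act m h = M.act m g := by
      intro g hg
      have hgm : g ∈ M.toTemporalFrame.H m := ⟨hg.1, hist_down _ hg.1 hg.2 hnext.1.1⟩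
      exact ⟨hgm, M.divide m h g hh hgm ⟨m2, hnext.1, hm2, hg.2⟩⟩
    refine ⟨m2, hnext.1.1, h, ⟨hh.1, hm2⟩, fun t => ⟨fun ht g hg => ?_, fun H => ?_⟩⟩
    · apply M.expansion m2 m g hnext.1 hg
      rw [← (hu g hg).2]; exact ht
    · obtain ⟨m3, g, hlt3, hg, ht⟩ := M.no_new m2 t H
      have := hnext.2 m3 hlt3
      rw [(hu g hg).2]
      rcases eq_or_ne m3 m with rfl | hne
      · exact ht
      · exact M.expansion m m3 g ⟨this, hne⟩ (hu g hg).1 ht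
  · have huniq : ∀ g ∈ M.toTemporalFrame.H m, g = h := by
      intro g hg
      apply hh.1.2 g hg.1.1
      intro x hx
      rcases hist_cmp _ hh.1 hx hh.2 with h1 | h1
      · exact hist_down _ hg.1 hg.2 h1
      · by_cases he : m = x
        · subst he; exact hg.2
        · exact absurd ⟨x, hx, h1, he⟩ hmax
    refine ⟨m, M.le_refl m, h, hh, fun t => ⟨fun ht g hg => ?_, fun H => H h hh⟩⟩
    rw [huniq g hg]; exact ht

theorem sound [Inhabited PropVar] {CS : Set (Form Ag PVar PConst PropVar)}
    (hCS : IsConstSpec CS) (hN : CSNormal CS M) (hmix : M.toTemporalFrame.MixSucc)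
    {A : Form Ag PVar PConst PropVar} (hA : Proves CS A) : M.Valid A := by
  induction hA with
  | ax h => exact ax_sound M h
  | mp _ _ ih1 ih2 => intro m h hh; exact (sat_imp M _ _ m h).1 (ih1 m h hh) (ih2 m h hh)
  | nec _ ih => intro m h hh m' h' _ hh'; exact ih m' h' hh'
  | @rd A ts ss hne _ ih =>
    intro m h hh
    rw [sat_imp, sat_bigOr]
    intro hK
    obtain ⟨m', hle, h', hh', hiff⟩ := rd_moment M hmix m h hh
    have h1 := ih m' h' hh'
    rw [sat_imp, sat_bigOr] at h1
    obtain ⟨B, hB, hs⟩ := h1 (fun m2 h2 hr hh2 => hK m2 h2 (M.R_trans (M.le_sub_R hle) hr) hh2)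
    rw [List.mem_append, List.mem_map, List.mem_map] at hB
    rcases hB with ⟨t, ht, rfl⟩ | ⟨t, ht, rfl⟩
    · refine ⟨Form.neg (Form.ann t), List.mem_append_left _ (List.mem_map.2 ⟨t, ht, rfl⟩), ?_⟩
      simp only [JstitModel.Sat] at hs ⊢
      rw [hiff]; exact hs
    · refine ⟨Form.ann t, List.mem_append_right _ (List.mem_map.2 ⟨t, ht, rfl⟩), ?_⟩
      simp only [JstitModel.Sat] at hs ⊢
      rw [hiff]; exact hs
  | rcs h => exact cs_sound M hCS hN (hCS.1 _ h) h

end Sound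

section Canon

variable {Ag PVar PConst PropVar : Type} [Inhabited PropVar]

inductive Der (CS S : Set (Form Ag PVar PConst PropVar)) : Form Ag PVar PConst PropVar → Prop
  | hyp {A} : A ∈ S → Der CS S A
  | thm {A} : Proves CS A → Der CS S A
  | mp {A B} : Der CS S (Form.imp A B) → Der CS S A → Der CS S B

variable {CS : Set (Form Ag PVar PConst PropVar)}

theorem Der.taut {S : Set (Form Ag PVar PConst PropVar)} {A} (h : Tautology A) : Der CS S A :=
  .thm (.ax (.a0 h))

theorem Der.mono {S S' : Set (Form Ag PVar PConst PropVar)} (hs : S ⊆ S') {A}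
    (h : Der CS S A) : Der CS S' A := by
  induction h with
  | hyp h => exact .hyp (hs h)
  | thm h => exact .thm h
  | mp _ _ ih1 ih2 => exact .mp ih1 ih2

theorem der_empty {A} (h : Der CS ∅ A) : Proves CS A := by
  induction h with
  | hyp h => exact absurd h (Set.notMem_empty _)
  | thm h => exact h
  | mp _ _ ih1 ih2 => exact .mp ih1 ih2

theorem deduction {S : Set (Form Ag PVar PConst PropVar)} {A B}
    (h : Der CS (insert B S) A) : Der CS S (Form.imp B A) := by
  induction h with
  | @hyp A h =>
    rcases h with rfl | h
    · apply Der.taut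
      intro v ha hn; simp [Form.imp, ha, hn]
    · refine Der.mp (A := A) (.taut ?_) (.hyp h)
      intro v ha hn; simp only [Form.imp, ha, hn]; cases v A <;> cases v B <;> rfl
  | @thm A h =>
    refine Der.mp (A := A) (.taut ?_) (.thm h)
    intro v ha hn; simp only [Form.imp, ha, hn]; cases v A <;> cases v B <;> rfl
  | @mp A C _ _ ih1 ih2 =>
    refine Der.mp (Der.mp (.taut ?_) ih1) ih2
    intro v ha hn; simp only [Form.imp, ha, hn]; cases v A <;> cases v B <;> cases v C <;> rfl

theorem der_chain {c : Set (Set (Form Ag PVar PConst PropVar))} (hc : IsChain (· ⊆ ·) c)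
    (hne : c.Nonempty) {A} (h : Der CS (⋃₀ c) A) : ∃ S ∈ c, Der CS S A := by
  induction h with
  | hyp h => obtain ⟨S, hS, hA⟩ := h; exact ⟨S, hS, .hyp hA⟩
  | thm h => obtain ⟨S, hS⟩ := hne; exact ⟨S, hS, .thm h⟩
  | mp _ _ ih1 ih2 =>
    obtain ⟨S, hS, h1⟩ := ih1
    obtain ⟨S', hS', h2⟩ := ih2
    rcases hc.total hS hS' with h | h
    · exact ⟨S', hS', .mp (h1.mono h) h2⟩
    · exact ⟨S, hS, .mp h1 (h2.mono h)⟩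

/-- Maximal consistent sets. -/
def MCS (CS : Set (Form Ag PVar PConst PropVar)) : Type :=
  { X : Set (Form Ag PVar PConst PropVar) //
    ¬ Der CS X Form.bot ∧ ∀ A, A ∈ X ∨ Form.neg A ∈ X }

instance : Membership (Form Ag PVar PConst PropVar) (MCS CS) := ⟨fun X A => A ∈ X.1⟩

theorem MCS.ext' {X Y : MCS CS} (h : ∀ A, A ∈ X ↔ A ∈ Y) : X = Y := Subtype.ext (Set.ext h)

theorem lind {S : Set (Form Ag PVar PConst PropVar)} (h : ¬ Der CS S Form.bot) :
    ∃ X : MCS CS, ∀ A ∈ S, A ∈ X := by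
  obtain ⟨X, hX, hmax⟩ := zorn_subset_nonempty {X | ¬ Der CS X Form.bot} (by
    intro c hc hch hne
    refine ⟨⋃₀ c, ?_, fun s hs => Set.subset_sUnion_of_mem hs⟩
    intro hd
    obtain ⟨S', hS', hd'⟩ := der_chain hch hne hd
    exact hc hS' hd') S h
  refine ⟨⟨X, hmax.1, ?_⟩, hX⟩
  intro A
  by_contra hcon
  rw [not_or] at hcon
  have key : ∀ B, B ∉ X → Der CS X (Form.imp B Form.bot) := by
    intro B hB
    apply deduction
    by_contra hd
    exact hB (hmax.2 hd (Set.subset_insert _ _) (Set.mem_insert _ _))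
  apply hmax.1
  refine Der.mp (Der.mp (.taut ?_) (key _ hcon.1)) (key _ hcon.2)
  intro v ha hn
  simp only [Form.imp, Form.bot, ha, hn]
  cases v A <;> cases v (Form.pv default) <;> rfl

theorem lind' {S : Set (Form Ag PVar PConst PropVar)} {A} (h : ¬ Der CS S A) :
    ∃ X : MCS CS, (∀ A ∈ S, A ∈ X) ∧ A ∉ X := by
  have : ¬ Der CS (insert (Form.neg A) S) Form.bot := by
    intro hd
    apply h
    refine Der.mp (.taut ?_) (deduction hd)
    intro v ha hn
    simp only [Form.imp, Form.bot, ha, hn]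
    cases v A <;> cases v (Form.pv default) <;> rfl
  obtain ⟨X, hX⟩ := lind this
  refine ⟨X, fun B hB => hX _ (Set.mem_insert_of_mem _ hB), fun hA => X.2.1 ?_⟩
  refine Der.mp (Der.mp (.taut ?_) (.hyp hA)) (.hyp (hX _ (Set.mem_insert _ _)))
  intro v ha hn
  simp only [Form.imp, Form.bot, ha, hn]
  cases v A <;> cases v (Form.pv default) <;> rfl

theorem mem_neg (X : MCS CS) (A) : Form.neg A ∈ X ↔ A ∉ X := by
  constructor
  · intro hn hA
    apply X.2.1
    refine Der.mp (Der.mp (.taut ?_) (.hyp hA)) (.hyp hn)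
    intro v ha hn
    simp only [Form.imp, Form.bot, ha, hn]
    cases v A <;> cases v (Form.pv default) <;> rfl
  · intro h; exact (X.2.2 A).resolve_left h

theorem mem_der (X : MCS CS) {A} (h : Der CS X.1 A) : A ∈ X := by
  by_contra hA
  have hn := (mem_neg X A).2 hA
  apply X.2.1
  refine Der.mp (Der.mp (.taut ?_) h) (.hyp hn)
  intro v ha hn
  simp only [Form.imp, Form.bot, ha, hn]
  cases v A <;> cases v (Form.pv default) <;> rfl

theorem mem_proves (X : MCS CS) {A} (h : Proves CS A) : A ∈ X := mem_der X (.thm h)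

theorem mem_and (X : MCS CS) (A B) : Form.and A B ∈ X ↔ A ∈ X ∧ B ∈ X := by
  refine ⟨fun h => ⟨mem_der X (.mp (.taut ?_) (.hyp h)), mem_der X (.mp (.taut ?_) (.hyp h))⟩,
    fun h => mem_der X (.mp (.mp (.taut ?_) (.hyp h.1)) (.hyp h.2))⟩
  all_goals
    intro v ha hn
    simp only [Form.imp, ha, hn]
    cases v A <;> cases v B <;> rfl

theorem mem_imp (X : MCS CS) (A B) : Form.imp A B ∈ X ↔ (A ∈ X → B ∈ X) := by
  simp only [Form.imp, mem_neg, mem_and]; tauto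

theorem mem_or (X : MCS CS) (A B) : Form.or A B ∈ X ↔ (A ∈ X ∨ B ∈ X) := by
  simp only [Form.or, mem_neg, mem_and]; tauto

theorem mem_bot (X : MCS CS) : Form.bot ∉ X := by
  simp only [Form.bot, mem_neg, mem_and]; tauto

theorem mem_andList (X : MCS CS) (L : List (Form Ag PVar PConst PropVar)) : ∀ A,
    andList A L ∈ X ↔ ∀ B ∈ A :: L, B ∈ X := by
  induction L with
  | nil => intro A; simp [andList]
  | cons C L ih => intro A; rw [andList, mem_and, ih]; simp

theorem mem_bigOr (X : MCS CS) (L : List (Form Ag PVar PConst PropVar)) :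
    bigOr L ∈ X ↔ ∃ B ∈ L, B ∈ X := by
  induction L with
  | nil => simp [bigOr, mem_bot]
  | cons C L ih =>
    cases L with
    | nil => simp [bigOr]
    | cons D L => rw [bigOr, mem_or, ih]; simp

theorem mem_ax (X : MCS CS) {A B} (h : Ax (Form.imp A B)) : A ∈ X → B ∈ X :=
  (mem_imp X A B).1 (mem_proves X (.ax h))

theorem proves_iff {A} : Proves CS A ↔ ∀ X : MCS CS, A ∈ X := by
  refine ⟨fun h X => mem_proves X h, fun h => ?_⟩
  by_contra hn
  obtain ⟨X, _, hX⟩ := lind' (CS := CS) (S := ∅) (A := A) (fun hd => hn (der_empty hd))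
  exact hX (h X)

theorem know_box (X : MCS CS) {A} (h : Form.know A ∈ X) : Form.box A ∈ X :=
  mem_ax X .knowT (mem_ax X .boxT (mem_ax X .a8 h))

theorem know_boxknow (X : MCS CS) {A} (h : Form.know A ∈ X) : Form.box (Form.know A) ∈ X := by
  have : Proves CS (Form.imp (Form.box A) A) := .ax .boxT
  have h1 : Proves CS (Form.imp (Form.know (Form.box A)) (Form.know A)) :=
    .mp (.ax .knowK) (.nec this)
  have h2 : Form.box (Form.imp (Form.know (Form.box A)) (Form.know A)) ∈ X :=
    know_box X (mem_proves X (.nec h1))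
  exact (mem_imp X _ _).1 (mem_ax X .boxK h2) (mem_ax X .a8 h)

/-- Witness lemma for a normal operator. -/
theorem witness (f : Form Ag PVar PConst PropVar → Form Ag PVar PConst PropVar)
    (X : MCS CS) (hnec : ∀ A, Proves CS A → f A ∈ X)
    (hK : ∀ A B, f (Form.imp A B) ∈ X → f A ∈ X → f B ∈ X) {A} (hA : f A ∉ X) :
    ∃ Y : MCS CS, (∀ B, f B ∈ X → B ∈ Y) ∧ A ∉ Y := by
  apply lind' (S := {B | f B ∈ X})
  intro hd
  apply hA
  induction hd with
  | hyp h => exact h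
  | thm h => exact hnec _ h
  | mp _ _ ih1 ih2 =>
    apply Classical.byContradiction
    intro hn
    exact hn (hK _ _ (Classical.byContradiction fun h => h (ih1 h))
      (Classical.byContradiction fun h => h (ih2 h)))

def Sim (X Y : MCS CS) : Prop := ∀ A, Form.box A ∈ X ↔ Form.box A ∈ Y

def JSim (j : Ag) (X Y : MCS CS) : Prop := ∀ A, Form.stit j A ∈ X ↔ Form.stit j A ∈ Y

def KLe (X Y : MCS CS) : Prop := ∀ A, Form.know A ∈ X → Form.know A ∈ Y

theorem box_wit (X : MCS CS) {A} (h : Form.box A ∉ X) : ∃ Y, Sim X Y ∧ A ∉ Y := by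
  obtain ⟨Y, hY, hA⟩ := witness Form.box X (fun A hA => know_box X (mem_proves X (.nec hA)))
    (fun A B h1 h2 => (mem_imp X _ _).1 (mem_ax X .boxK h1) h2) h
  refine ⟨Y, fun B => ⟨fun hB => hY _ (mem_ax X .box4 hB), fun hB => ?_⟩, hA⟩
  by_contra hn
  exact (mem_neg Y _).1 (hY _ (mem_ax X .box5 ((mem_neg X _).2 hn))) hB

theorem stit_wit (j : Ag) (X : MCS CS) {A} (h : Form.stit j A ∉ X) : ∃ Y, JSim j X Y ∧ A ∉ Y := by
  obtain ⟨Y, hY, hA⟩ := witness (Form.stit j) X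
    (fun A hA => mem_ax X .a2 (know_box X (mem_proves X (.nec hA))))
    (fun A B h1 h2 => (mem_imp X _ _).1 (mem_ax X .stitK h1) h2) h
  refine ⟨Y, fun B => ⟨fun hB => hY _ (mem_ax X .stit4 hB), fun hB => ?_⟩, hA⟩
  by_contra hn
  exact (mem_neg Y _).1 (hY _ (mem_ax X .stit5 ((mem_neg X _).2 hn))) hB

theorem know_wit (X : MCS CS) {A} (h : Form.know A ∉ X) : ∃ Y, KLe X Y ∧ A ∉ Y := by
  obtain ⟨Y, hY, hA⟩ := witness Form.know X (fun A hA => mem_proves X (.nec hA))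
    (fun A B h1 h2 => (mem_imp X _ _).1 (mem_ax X .knowK h1) h2) h
  exact ⟨Y, fun B hB => hY _ (mem_ax X .know4 hB), hA⟩

theorem JSim.sim {j : Ag} {X Y : MCS CS} (h : JSim j X Y) : Sim X Y := by
  have key : ∀ {X Y : MCS CS}, JSim j X Y → ∀ A, Form.box A ∈ X → Form.box A ∈ Y := by
    intro X Y h A hA
    exact mem_ax Y .stitT ((h _).1 (mem_ax X .a2 (mem_ax X .box4 hA)))
  exact fun A => ⟨key h A, key (fun B => (h B).symm) A⟩

theorem Sim.know {X Y : MCS CS} (h : Sim X Y) (A) : Form.know A ∈ X ↔ Form.know A ∈ Y :=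
  ⟨fun hA => mem_ax Y .boxT ((h _).1 (know_boxknow X hA)),
   fun hA => mem_ax X .boxT ((h _).2 (know_boxknow Y hA))⟩

theorem mem_dia (X : MCS CS) (A) : Form.dia A ∈ X ↔ ∃ Y, Sim X Y ∧ A ∈ Y := by
  rw [Form.dia, mem_neg]
  constructor
  · intro h
    obtain ⟨Y, hY, hA⟩ := box_wit X h
    refine ⟨Y, hY, ?_⟩
    rw [mem_neg] at hA
    exact not_not.1 hA
  · rintro ⟨Y, hY, hA⟩ hb
    exact (mem_neg Y A).1 (mem_ax Y .boxT ((hY _).1 hb)) hA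

theorem top_mem (X : MCS CS) : Form.imp Form.bot Form.bot ∈ X := by rw [mem_imp]; exact id

theorem top_proves : Proves CS (Form.imp Form.bot Form.bot) := proves_iff.2 top_mem

theorem know_and (X : MCS CS) {A B} (h1 : Form.know A ∈ X) (h2 : Form.know B ∈ X) :
    Form.know (Form.and A B) ∈ X := by
  by_contra h
  obtain ⟨Y, hY, hA⟩ := know_wit X h
  exact hA ((mem_and Y _ _).2 ⟨mem_ax Y .knowT (hY _ h1), mem_ax Y .knowT (hY _ h2)⟩)

theorem box_and (X : MCS CS) (A B) :
    Form.box (Form.and A B) ∈ X ↔ Form.box A ∈ X ∧ Form.box B ∈ X := by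
  constructor
  · intro h
    constructor <;> by_contra hn <;> obtain ⟨Y, hY, hA⟩ := box_wit X hn <;>
      have := (mem_and Y _ _).1 (mem_ax Y .boxT ((hY _).1 h))
    · exact hA this.1
    · exact hA this.2
  · rintro ⟨h1, h2⟩
    by_contra h
    obtain ⟨Y, hY, hA⟩ := box_wit X h
    exact hA ((mem_and Y _ _).2 ⟨mem_ax Y .boxT ((hY _).1 h1), mem_ax Y .boxT ((hY _).1 h2)⟩)

theorem stit_and (j : Ag) (X : MCS CS) (A B) :
    Form.stit j (Form.and A B) ∈ X ↔ Form.stit j A ∈ X ∧ Form.stit j B ∈ X := by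
  constructor
  · intro h
    constructor <;> by_contra hn <;> obtain ⟨Y, hY, hA⟩ := stit_wit j X hn <;>
      have := (mem_and Y _ _).1 (mem_ax Y .stitT ((hY _).1 h))
    · exact hA this.1
    · exact hA this.2
  · rintro ⟨h1, h2⟩
    by_contra h
    obtain ⟨Y, hY, hA⟩ := stit_wit j X h
    exact hA ((mem_and Y _ _).2 ⟨mem_ax Y .stitT ((hY _).1 h1), mem_ax Y .stitT ((hY _).1 h2)⟩)

theorem know_and_iff (X : MCS CS) (A B) :
    Form.know (Form.and A B) ∈ X ↔ Form.know A ∈ X ∧ Form.know B ∈ X := by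
  refine ⟨fun h => ?_, fun h => know_and X h.1 h.2⟩
  constructor <;> by_contra hn <;> obtain ⟨Y, hY, hA⟩ := know_wit X hn <;>
    have := (mem_and Y _ _).1 (mem_ax Y .knowT (hY _ h))
  · exact hA this.1
  · exact hA this.2

theorem next_ex (X : MCS CS) : ∃ Y : MCS CS, KLe X Y ∧
    ∀ t, Form.box (Form.ann t) ∈ Y ↔ Form.ann t ∈ X := by
  let S : Set (Form Ag PVar PConst PropVar) := {B | (Form.know B ∈ X) ∨
    (∃ t, Form.ann t ∈ X ∧ B = Form.box (Form.ann t)) ∨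
    (∃ t, Form.ann t ∉ X ∧ B = Form.neg (Form.box (Form.ann t)))}
  have key : ∀ A, Der CS S A → ∃ (C : Form Ag PVar PConst PropVar) (ts ss : List (Pol PVar PConst)),
      Form.know C ∈ X ∧ (∀ t ∈ ts, Form.ann t ∈ X) ∧ (∀ t ∈ ss, Form.ann t ∉ X) ∧
      ∀ Y : MCS CS, Form.know C ∈ Y → (∀ t ∈ ts, Form.box (Form.ann t) ∈ Y) →
        (∀ t ∈ ss, Form.box (Form.ann t) ∉ Y) → A ∈ Y := by
    intro A hA
    induction hA with
    | @hyp A h =>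
      rcases h with h | ⟨t, ht, rfl⟩ | ⟨t, ht, rfl⟩
      · exact ⟨A, [], [], h, by simp, by simp, fun Y hY _ _ => mem_ax Y .knowT hY⟩
      · exact ⟨_, [t], [], mem_proves X (.nec top_proves), by simpa using ht, by simp,
          fun Y _ h _ => h t (by simp)⟩
      · exact ⟨_, [], [t], mem_proves X (.nec top_proves), by simp, by simpa using ht,
          fun Y _ _ h => (mem_neg Y _).2 (h t (by simp))⟩
    | thm h => exact ⟨_, [], [], mem_proves X (.nec top_proves), by simp, by simp,
          fun Y _ _ _ => mem_proves Y h⟩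
    | mp _ _ ih1 ih2 =>
      obtain ⟨C1, t1, s1, a1, b1, c1, d1⟩ := ih1
      obtain ⟨C2, t2, s2, a2, b2, c2, d2⟩ := ih2
      refine ⟨Form.and C1 C2, t1 ++ t2, s1 ++ s2, know_and X a1 a2, ?_, ?_, ?_⟩
      · intro t ht; rcases List.mem_append.1 ht with h | h
        · exact b1 t h
        · exact b2 t h
      · intro t ht; rcases List.mem_append.1 ht with h | h
        · exact c1 t h
        · exact c2 t h
      · intro Y hK ht hs
        rw [know_and_iff] at hK
        refine (mem_imp Y _ _).1 (d1 Y hK.1 ?_ ?_) (d2 Y hK.2 ?_ ?_)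
        · exact fun t h => ht t (List.mem_append_left _ h)
        · exact fun t h => hs t (List.mem_append_left _ h)
        · exact fun t h => ht t (List.mem_append_right _ h)
        · exact fun t h => hs t (List.mem_append_right _ h)
  have hS : ¬ Der CS S Form.bot := by
    intro hd
    obtain ⟨C, ts, ss, a, b, c, d⟩ := key _ hd
    by_cases hne : ts ++ ss = []
    · obtain ⟨rfl, rfl⟩ := List.append_eq_nil_iff.1 hne
      exact mem_bot X (d X a (by simp) (by simp))
    · have h1 : Proves CS (Form.imp (Form.know C)
        (bigOr ((ts.map fun t => Form.neg (Form.box (Form.ann t))) ++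
                (ss.map fun s => Form.box (Form.ann s))))) := by
        rw [proves_iff]
        intro Y
        rw [mem_imp, mem_bigOr]
        intro hK
        by_contra hcon
        refine mem_bot Y (d Y hK (fun t ht => ?_) (fun t ht hb => hcon ⟨_,
          List.mem_append_right _ (List.mem_map.2 ⟨t, ht, rfl⟩), hb⟩))
        by_contra hb
        exact hcon ⟨_, List.mem_append_left _ (List.mem_map.2 ⟨t, ht, rfl⟩), (mem_neg Y _).2 hb⟩
      have h2 := (mem_imp X _ _).1 (mem_proves X (.rd hne h1)) a
      rw [mem_bigOr] at h2
      obtain ⟨B, hB, hBX⟩ := h2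
      rw [List.mem_append, List.mem_map, List.mem_map] at hB
      rcases hB with ⟨t, ht, rfl⟩ | ⟨t, ht, rfl⟩
      · exact (mem_neg X _).1 hBX (b t ht)
      · exact c t ht hBX
  obtain ⟨Y, hY⟩ := lind hS
  refine ⟨Y, fun A hA => hY _ (Or.inl (mem_ax X .know4 hA)), fun t => ⟨fun h => ?_, fun h => ?_⟩⟩
  · by_contra hn
    exact (mem_neg Y _).1 (hY _ (Or.inr (Or.inr ⟨t, hn, rfl⟩))) h
  · exact hY _ (Or.inr (Or.inl ⟨t, h, rfl⟩))

theorem indep [Finite Ag] (Z : MCS CS) (f : Ag → MCS CS) (hf : ∀ j, Sim Z (f j)) :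
    ∃ W : MCS CS, Sim Z W ∧ ∀ j, JSim j (f j) W := by
  classical
  haveI := Fintype.ofFinite Ag
  let S : Set (Form Ag PVar PConst PropVar) := {B | (Form.box B ∈ Z) ∨
    (∃ j, Form.stit j B ∈ f j)}
  have key : ∀ A, Der CS S A → ∃ (C : Form Ag PVar PConst PropVar)
      (F : Ag → Form Ag PVar PConst PropVar),
      Form.box C ∈ Z ∧ (∀ j, Form.stit j (F j) ∈ f j) ∧
      ∀ Y : MCS CS, Form.box C ∈ Y → (∀ j, Form.stit j (F j) ∈ Y) → A ∈ Y := by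
    have ht : ∀ (Y : MCS CS), Form.box (Form.imp Form.bot Form.bot) ∈ Y :=
      fun Y => know_box Y (mem_proves Y (.nec top_proves))
    intro A hA
    induction hA with
    | @hyp A h =>
      rcases h with h | ⟨j, h⟩
      · exact ⟨A, fun _ => Form.imp Form.bot Form.bot, h, fun j => mem_ax _ .a2 (ht _),
          fun Y hY _ => mem_ax Y .boxT hY⟩
      · refine ⟨_, fun i => if i = j then A else Form.imp Form.bot Form.bot, ht Z, ?_, ?_⟩
        · intro i
          by_cases hi : i = j
          · subst hi; simpa using h
          · simp only [hi, if_false]; exact mem_ax _ .a2 (ht _)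
        · intro Y _ hY
          have := hY j
          simp only [if_true] at this
          exact mem_ax Y .stitT this
    | thm h => exact ⟨_, fun _ => Form.imp Form.bot Form.bot, ht Z, fun j => mem_ax _ .a2 (ht _),
          fun Y _ _ => mem_proves Y h⟩
    | mp _ _ ih1 ih2 =>
      obtain ⟨C1, F1, a1, b1, c1⟩ := ih1
      obtain ⟨C2, F2, a2, b2, c2⟩ := ih2
      refine ⟨Form.and C1 C2, fun j => Form.and (F1 j) (F2 j), (box_and _ _ _).2 ⟨a1, a2⟩,
        fun j => (stit_and j _ _ _).2 ⟨b1 j, b2 j⟩, ?_⟩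
      intro Y hC hF
      rw [box_and] at hC
      simp only [stit_and] at hF
      exact (mem_imp Y _ _).1 (c1 Y hC.1 fun j => (hF j).1) (c2 Y hC.2 fun j => (hF j).2)
  have hS : ¬ Der CS S Form.bot := by
    intro hd
    obtain ⟨C, F, a, b, c⟩ := key _ hd
    have hnd := Finset.nodup_toList (Finset.univ : Finset Ag)
    have hall : ∀ j : Ag, j ∈ (Finset.univ : Finset Ag).toList := fun j => by simp
    cases hl : (Finset.univ : Finset Ag).toList with
    | nil =>
      rw [hl] at hall
      exact mem_bot Z (c Z a (fun j => absurd (hall j) (by simp)))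
    | cons i l =>
      rw [hl] at hall hnd
      have h3 := mem_ax Z (Ax.a3 (p := (i, F i)) (L := l.map fun j => (j, F j))
        (by simpa [Function.comp_def] using hnd))
      rw [mem_andList, mem_dia] at h3
      obtain ⟨Y, hY, hYa⟩ := h3 (by
        intro B hB
        have : B ∈ (i :: l).map (fun j => Form.dia (Form.stit j (F j))) := by
          simpa using hB
        obtain ⟨j, _, rfl⟩ := List.mem_map.1 this
        exact (mem_dia Z _).2 ⟨f j, hf j, b j⟩)
      rw [mem_andList] at hYa
      refine mem_bot Y (c Y ((hY _).1 a) fun j => hYa _ ?_)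
      have := List.mem_map_of_mem (f := fun j => Form.stit j (F j)) (hall j)
      simpa using this
  obtain ⟨W, hW⟩ := lind hS
  refine ⟨W, fun B => ⟨fun hB => hW _ (Or.inl (mem_ax Z .box4 hB)), fun hB => ?_⟩,
    fun j B => ⟨fun hB => hW _ (Or.inr ⟨j, mem_ax _ .stit4 hB⟩), fun hB => ?_⟩⟩
  · by_contra hn
    exact (mem_neg W _).1 (hW _ (Or.inl (mem_ax Z .box5 ((mem_neg Z _).2 hn)))) hB
  · by_contra hn
    exact (mem_neg W _).1 (hW _ (Or.inr ⟨j, (mem_ax _ .stit5 ((mem_neg _ _).2 hn))⟩)) hB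

end Canon

section Triv

variable (Ag PVar PConst PropVar : Type)

def trivT : TemporalFrame Unit where
  le _ _ := True
  le_refl _ := trivial
  le_antisymm _ _ := rfl
  le_trans _ _ := trivial
  nonempty := ⟨()⟩
  hist_conn _ _ := ⟨(), trivial, trivial⟩
  no_backward _ _ _ _ _ := Or.inl trivial

def trivM : JstitModel Unit Ag PVar PConst PropVar where
  toTemporalFrame := trivT
  choice m _ := {trivT.H m}
  choice_cell_nonempty := by
    rintro m j C rfl; exact exists_hist _ m
  choice_cell_sub := by rintro m j C rfl; exact subset_rfl
  choice_cover m j h hh := ⟨_, rfl, hh⟩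
  choice_disjoint := by rintro m j C C' rfl rfl _; rfl
  no_choice_undiv := by rintro m j h h' hh hh' _ C rfl _; exact hh'
  independence := by
    intro m f hf
    obtain ⟨h, hh⟩ := exists_hist trivT m
    refine ⟨h, Set.mem_iInter.2 fun j => ?_⟩
    rw [Set.mem_singleton_iff.1 (hf j)]; exact hh
  R _ _ := True
  Re _ _ := True
  R_refl _ := trivial
  R_trans _ _ := trivial
  Re_refl _ := trivial
  Re_trans _ _ := trivial
  R_sub_Re _ := trivial
  le_sub_R _ := trivial
  act _ _ := ∅
  ev _ _ := Set.univ
  val _ := ∅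
  ev_mono _ _ _ _ := subset_rfl
  ev_app _ _ _ _ _ _ _ := trivial
  ev_sum_left _ _ _ := subset_rfl
  ev_sum_right _ _ _ := subset_rfl
  ev_bang _ _ _ _ := trivial
  expansion _ _ _ _ _ := subset_rfl
  no_new := by
    intro m t h
    obtain ⟨g, hg⟩ := exists_hist trivT m
    exact absurd (h g hg) (Set.notMem_empty _)
  divide _ _ _ _ _ _ := rfl
  transparent := by
    intro m m' t _ h
    obtain ⟨g, hg⟩ := exists_hist trivT m
    exact absurd (h g hg) (Set.notMem_empty _)

end Triv

section Model

variable {Ag PVar PConst PropVar : Type} [Inhabited PropVar]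
variable {CS : Set (Form Ag PVar PConst PropVar)}

theorem exists_dull (hCS : IsConstSpec CS) :
    ∃ X : MCS CS, ∀ t, Form.box (Form.ann t) ∉ X := by
  let M := trivM Ag PVar PConst PropVar
  have hN : CSNormal CS M := fun _ _ _ _ => trivial
  have hmix : M.toTemporalFrame.MixSucc := fun m m1 => Or.inl fun h => absurd rfl h.2
  obtain ⟨h, hh⟩ := exists_hist M.toTemporalFrame ()
  have hd : ¬ Der CS {A | M.Sat A () h} Form.bot := by
    intro hd
    have : ∀ A, Der CS {A | M.Sat A () h} A → M.Sat A () h := by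
      intro A hA
      induction hA with
      | hyp h => exact h
      | thm h1 => exact sound M hCS hN hmix h1 _ _ hh
      | mp _ _ ih1 ih2 => exact (sat_imp M _ _ _ _).1 ih1 ih2
    exact sat_bot M _ _ (this _ hd)
  obtain ⟨X, hX⟩ := lind hd
  refine ⟨X, fun t => (mem_neg X _).1 (hX _ ?_)⟩
  intro hb
  exact hb h hh

/-- The list tree. -/
def lT (D : Type) : TemporalFrame (List D) where
  le σ τ := σ <:+ τ
  le_refl := List.suffix_refl
  le_antisymm h h' := h.eq_of_length (le_antisymm h.length_le h'.length_le)
  le_trans h h' := h.trans h'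
  nonempty := ⟨[]⟩
  hist_conn _ _ := ⟨[], List.nil_suffix, List.nil_suffix⟩
  no_backward _ _ _ h1 h2 := List.suffix_or_suffix_of_suffix h1 h2

theorem lT_lt {D : Type} {σ τ : List D} (h : (lT D).lt σ τ) : ∃ d, (d :: σ) <:+ τ := by
  obtain ⟨⟨l, rfl⟩, hne⟩ := h
  rcases List.eq_nil_or_concat l with rfl | ⟨l', d, rfl⟩
  · exact absurd rfl hne
  · exact ⟨d, l', by simp⟩

theorem lT_lt_cons {D : Type} (d : D) (σ : List D) : (lT D).lt σ (d :: σ) :=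
  ⟨List.suffix_cons d σ, fun h => by simpa using congrArg List.length h⟩

theorem lT_next {D : Type} (d : D) (σ : List D) : (lT D).Next σ (d :: σ) := by
  refine ⟨lT_lt_cons d σ, ?_⟩
  rintro τ ⟨h, hne⟩
  rcases List.suffix_cons_iff.1 h with h | h
  · exact absurd h hne
  · exact h

theorem lT_mix (D : Type) : (lT D).MixSucc := by
  intro m m1
  refine Or.inl fun h => ?_
  obtain ⟨d, hd⟩ := lT_lt h
  exact ⟨_, hd, lT_next d m⟩

theorem lT_lab_ex {D : Type} [Nonempty D] {σ : List D} {h : Set (List D)} (hh : h ∈ (lT D).H σ) :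
    ∃ d, d :: σ ∈ h := by
  by_cases hex : ∃ τ ∈ h, (lT D).lt σ τ
  · obtain ⟨τ, hτ, hlt⟩ := hex
    obtain ⟨d, hd⟩ := lT_lt hlt
    exact ⟨d, hist_down _ hh.1 hτ hd⟩
  · obtain ⟨d⟩ := ‹Nonempty D›
    refine ⟨d, ?_⟩
    have hc : IsChain (lT D).le (insert (d :: σ) h) := by
      refine hh.1.1.insert ?_
      intro b hb _
      right
      rcases hist_cmp _ hh.1 hb hh.2 with h1 | h1
      · exact (lT D).le_trans h1 (lT_lt_cons d σ).1
      · by_cases he : σ = b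
        · subst he; exact (lT_lt_cons d σ).1
        · exact absurd ⟨b, hb, h1, he⟩ hex
    rw [← hh.1.2 _ hc (Set.subset_insert _ _)]
    exact Set.mem_insert _ _

theorem lT_len {D : Type} {h : Set (List D)} (hh : (lT D).IsHistory h) {σ τ : List D}
    (h1 : σ ∈ h) (h2 : τ ∈ h) (hl : σ.length ≤ τ.length) : σ <:+ τ := by
  rcases hist_cmp _ hh h1 h2 with h | h
  · exact h
  · have h' : τ <:+ σ := h
    rw [h'.eq_of_length (le_antisymm h'.length_le hl)]

open Classical in
noncomputable def lab {D : Type} [Nonempty D] (h : Set (List D)) (σ : List D) : D :=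
  if hx : ∃ d, d :: σ ∈ h then hx.choose else Classical.arbitrary D

theorem lab_mem {D : Type} [Nonempty D] {σ : List D} {h : Set (List D)} (hh : h ∈ (lT D).H σ) :
    lab h σ :: σ ∈ h := by
  have hx := lT_lab_ex hh
  rw [lab, dif_pos hx]
  exact hx.choose_spec

theorem lab_eq {D : Type} [Nonempty D] {σ : List D} {d : D} {h : Set (List D)}
    (hh : h ∈ (lT D).H (d :: σ)) : lab h σ = d := by
  have h1 : h ∈ (lT D).H σ := ⟨hh.1, hist_down _ hh.1 hh.2 (lT_lt_cons d σ).1⟩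
  have := (lT_len hh.1 (lab_mem h1) hh.2 (by simp)).eq_of_length (by simp)
  simpa using this

theorem lab_undiv {D : Type} [Nonempty D] {σ : List D} {h g : Set (List D)}
    (hh : h ∈ (lT D).H σ) (hg : g ∈ (lT D).H σ) (hu : (lT D).Undiv σ h g) :
    lab h σ = lab g σ := by
  obtain ⟨τ, hlt, h1, h2⟩ := hu
  obtain ⟨d, hd⟩ := lT_lt hlt
  rw [lab_eq (d := d) ⟨hh.1, hist_down _ hh.1 h1 hd⟩, lab_eq (d := d) ⟨hg.1, hist_down _ hg.1 h2 hd⟩]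

theorem hist_through {D : Type} [Nonempty D] (d : D) (σ : List D) :
    ∃ h ∈ (lT D).H σ, lab h σ = d := by
  obtain ⟨h, hh⟩ := exists_hist (lT D) (d :: σ)
  exact ⟨h, ⟨hh.1, hist_down _ hh.1 hh.2 (lT_lt_cons d σ).1⟩, lab_eq hh⟩

variable [Nonempty (MCS CS)]

noncomputable def nxt (X : MCS CS) : MCS CS := (next_ex X).choose

theorem nxt_k (X : MCS CS) : KLe X (nxt X) := (next_ex X).choose_spec.1
theorem nxt_b (X : MCS CS) (t) : Form.box (Form.ann t) ∈ nxt X ↔ Form.ann t ∈ X :=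
  (next_ex X).choose_spec.2 t

open Classical in
noncomputable def sel (X d : MCS CS) : MCS CS := if Sim X d then d else X

theorem sel_sim (X d : MCS CS) : Sim X (sel X d) := by
  unfold sel; split
  · assumption
  · exact fun _ => Iff.rfl

theorem sel_eq {X d : MCS CS} (h : Sim X d) : sel X d = d := if_pos h

noncomputable def st : List (MCS CS) → MCS CS
  | [] => Classical.arbitrary _
  | [d] => d
  | d :: e :: σ => nxt (sel (st (e :: σ)) d)

noncomputable def zz (σ : List (MCS CS)) (h : Set (List (MCS CS))) : MCS CS :=
  sel (st σ) (lab h σ)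

theorem st_cons {σ : List (MCS CS)} (hσ : σ ≠ []) (d : MCS CS) :
    st (d :: σ) = nxt (sel (st σ) d) := by
  cases σ with
  | nil => exact absurd rfl hσ
  | cons e σ => rw [st]

theorem KLe.trans {X Y Z : MCS CS} (h : KLe X Y) (h' : KLe Y Z) : KLe X Z :=
  fun A hA => h' A (h A hA)

theorem st_mono {σ τ : List (MCS CS)} (hσ : σ ≠ []) (h : σ <:+ τ) : τ ≠ [] ∧ KLe (st σ) (st τ) := by
  obtain ⟨l, rfl⟩ := h
  induction l with
  | nil => exact ⟨hσ, fun A h => h⟩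
  | cons d l ih =>
    refine ⟨by simp, ?_⟩
    rw [List.cons_append, st_cons ih.1]
    exact (ih.2.trans fun A => ((sel_sim _ d).know A).1).trans (nxt_k _)

theorem KLe.ann {X Y : MCS CS} (h : KLe X Y) {t} (hb : Form.box (Form.ann t) ∈ X) :
    Form.box (Form.ann t) ∈ Y := mem_ax Y .knowT (h _ (mem_ax X .a9 hb))

theorem KLe.prv {X Y : MCS CS} (h : KLe X Y) {t A} (hb : Form.proves t A ∈ X) :
    Form.proves t A ∈ Y := by
  have h1 := ((mem_and X _ _).1 (mem_ax X .a5 hb)).1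
  have h2 := ((mem_and X _ _).1 (mem_ax X .a5 h1)).2
  exact mem_ax Y .knowT (h _ h2)

def cR (σ τ : List (MCS CS)) : Prop := σ = [] ∨ (τ ≠ [] ∧ KLe (st σ) (st τ))

theorem cR_refl (σ : List (MCS CS)) : cR σ σ := by
  by_cases h : σ = []
  · exact Or.inl h
  · exact Or.inr ⟨h, fun _ h => h⟩

theorem cR_trans {σ τ ρ : List (MCS CS)} (h : cR σ τ) (h' : cR τ ρ) : cR σ ρ := by
  rcases h with h | h
  · exact Or.inl h
  · rcases h' with h' | h'
    · exact absurd h' h.1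
    · exact Or.inr ⟨h'.1, h.2.trans h'.2⟩

theorem cR_le {σ τ : List (MCS CS)} (h : σ <:+ τ) : cR σ τ := by
  by_cases hs : σ = []
  · exact Or.inl hs
  · exact Or.inr (st_mono hs h)

def cell (σ : List (MCS CS)) (j : Ag) (h : Set (List (MCS CS))) : Set (Set (List (MCS CS))) :=
  {g | g ∈ (lT (MCS CS)).H σ ∧ JSim j (zz σ h) (zz σ g)}

def cact (σ : List (MCS CS)) (h : Set (List (MCS CS))) : Set (Pol PVar PConst) :=
  {t | Form.box (Form.ann t) ∈ st (lab h σ :: σ)}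

theorem zz_surj {σ : List (MCS CS)} {W : MCS CS} (hW : Sim (st σ) W) :
    ∃ h ∈ (lT (MCS CS)).H σ, zz σ h = W := by
  obtain ⟨h, hh, hl⟩ := hist_through W σ
  exact ⟨h, hh, by rw [zz, hl, sel_eq hW]⟩

theorem cact_iff {σ : List (MCS CS)} (hσ : σ ≠ []) (h t) : t ∈ cact σ h ↔ Form.ann t ∈ zz σ h := by
  simp only [cact, Set.mem_setOf_eq, st_cons hσ, nxt_b, zz]

theorem cact_all {σ : List (MCS CS)} (hσ : σ ≠ []) (t) :
    (∀ h ∈ (lT (MCS CS)).H σ, t ∈ cact σ h) ↔ Form.box (Form.ann t) ∈ st σ := by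
  constructor
  · intro H
    by_contra hn
    obtain ⟨W, hW, hA⟩ := box_wit _ hn
    obtain ⟨h, hh, hz⟩ := zz_surj hW
    apply hA
    rw [← hz, ← cact_iff hσ]
    exact H h hh
  · intro hb h _
    rw [cact_iff hσ]
    exact mem_ax _ .boxT ((sel_sim _ _ _).1 hb)

theorem cact_root (hd : ∃ X : MCS CS, ∀ t, Form.box (Form.ann t) ∉ X) (t) :
    ¬ ∀ h ∈ (lT (MCS CS)).H [], t ∈ cact [] h := by
  intro H
  obtain ⟨X, hX⟩ := hd
  obtain ⟨h, hh, hl⟩ := hist_through X []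
  have := H h hh
  simp only [cact, Set.mem_setOf_eq, hl, st] at this
  exact hX t this

noncomputable def cM [Finite Ag] (hd : ∃ X : MCS CS, ∀ t, Form.box (Form.ann t) ∉ X) :
    JstitModel (List (MCS CS)) Ag PVar PConst PropVar where
  toTemporalFrame := lT (MCS CS)
  choice σ j := {C | ∃ h ∈ (lT (MCS CS)).H σ, C = cell σ j h}
  choice_cell_nonempty := by
    rintro σ j C ⟨h, hh, rfl⟩; exact ⟨h, hh, fun _ => Iff.rfl⟩
  choice_cell_sub := by
    rintro σ j C ⟨h, hh, rfl⟩ g hg; exact hg.1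
  choice_cover := by
    intro σ j h hh; exact ⟨_, ⟨h, hh, rfl⟩, hh, fun _ => Iff.rfl⟩
  choice_disjoint := by
    rintro σ j C C' ⟨h, hh, rfl⟩ ⟨h', hh', rfl⟩ ⟨g, hg, hg'⟩
    have key : ∀ A, Form.stit j A ∈ zz σ h ↔ Form.stit j A ∈ zz σ h' :=
      fun A => (hg.2 A).trans (hg'.2 A).symm
    ext k
    exact and_congr_right fun _ => forall_congr' fun A => by rw [key A]
  no_choice_undiv := by
    rintro σ j h h' hh hh' hu C ⟨g, hg, rfl⟩ hC
    refine ⟨hh', ?_⟩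
    have : zz σ h' = zz σ h := by rw [zz, zz, lab_undiv hh hh' hu]
    rw [this]; exact hC.2
  independence := by
    intro σ f hf
    choose g hg hfg using hf
    obtain ⟨W, hW, hj⟩ := indep (st σ) (fun j => zz σ (g j)) (fun j => sel_sim _ _)
    obtain ⟨h, hh, hz⟩ := zz_surj hW
    refine ⟨h, Set.mem_iInter.2 fun j => ?_⟩
    rw [hfg j]
    exact ⟨hh, by rw [hz]; exact hj j⟩
  R := cR
  Re := cR
  R_refl := cR_refl
  R_trans := cR_trans
  Re_refl := cR_refl
  Re_trans := cR_trans
  R_sub_Re h := h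
  le_sub_R h := cR_le h
  act := cact
  ev σ t := {A | ∀ τ, cR σ τ → τ ≠ [] → Form.proves t A ∈ st τ}
  val p := {x | Form.pv p ∈ zz x.1 x.2}
  ev_mono := fun m m' t hr A hA τ hτ hne => hA τ (cR_trans hr hτ) hne
  ev_app := fun m s t A B h1 h2 τ hτ hne =>
    (mem_imp _ _ _).1 (mem_ax _ .a4 (h1 τ hτ hne)) (h2 τ hτ hne)
  ev_sum_left := fun m s t A h τ hτ hne =>
    mem_ax _ .a6 ((mem_or _ _ _).2 (Or.inl (h τ hτ hne)))
  ev_sum_right := fun m s t A h τ hτ hne =>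
    mem_ax _ .a6 ((mem_or _ _ _).2 (Or.inr (h τ hτ hne)))
  ev_bang := fun m t A h τ hτ hne => ((mem_and _ _ _).1 (mem_ax _ .a5 (h τ hτ hne))).1
  expansion := by
    intro m m' h hlt hh t ht
    have hh' : h ∈ (lT (MCS CS)).H m' := ⟨hh.1, hist_down _ hh.1 hh.2 hlt.1⟩
    have hs : (lab h m' :: m') <:+ (lab h m :: m) := by
      apply lT_len hh.1 (lab_mem hh') (lab_mem hh)
      have : m' <:+ m := hlt.1
      simpa using this.length_le
    exact (st_mono (by simp) hs).2.ann ht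
  no_new := by
    intro m t H
    cases m with
    | nil => exact absurd H (cact_root hd t)
    | cons d σ =>
      rw [cact_all (by simp)] at H
      obtain ⟨h, hh⟩ := exists_hist (lT (MCS CS)) (d :: σ)
      refine ⟨σ, h, lT_lt_cons d σ, hh, ?_⟩
      simp only [cact, Set.mem_setOf_eq, lab_eq hh]
      exact H
  divide := by
    intro m h h' hh hh' hu
    rw [cact, cact, lab_undiv hh hh' hu]
  transparent := by
    intro m m' t hr H
    by_cases hm : m = []
    · subst hm; exact absurd H (cact_root hd t)
    · obtain ⟨h1, h2⟩ := hr.resolve_left hm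
      rw [cact_all hm] at H
      exact (cact_all h1 t).2 (h2.ann H)

theorem truth [Finite Ag] (hd : ∃ X : MCS CS, ∀ t, Form.box (Form.ann t) ∉ X)
    (A : Form Ag PVar PConst PropVar) : ∀ σ h, σ ≠ [] → h ∈ (lT (MCS CS)).H σ →
      ((cM hd).Sat A σ h ↔ A ∈ zz σ h) := by
  have hknow : ∀ (σ τ : List (MCS CS)) h h' B, σ ≠ [] → cR σ τ → Form.know B ∈ zz σ h →
      B ∈ zz τ h' := by
    intro σ τ h h' B hσ hr hB
    obtain ⟨_, h2⟩ := hr.resolve_left hσ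
    have h3 := h2 _ (((sel_sim _ _).know _).2 hB)
    exact mem_ax _ .boxT ((sel_sim _ _ _).1 (know_box _ h3))
  induction A with
  | pv p => intro σ h hσ hh; exact Iff.rfl
  | and A B ih1 ih2 =>
    intro σ h hσ hh; rw [JstitModel.Sat, ih1 σ h hσ hh, ih2 σ h hσ hh, mem_and]
  | neg A ih => intro σ h hσ hh; rw [JstitModel.Sat, ih σ h hσ hh, mem_neg]
  | stit j A ih =>
    intro σ h hσ hh
    rw [sat_stit_iff (cM hd) j A σ h (cell σ j h) ⟨h, hh, rfl⟩ ⟨hh, fun _ => Iff.rfl⟩]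
    constructor
    · intro H
      by_contra hn
      obtain ⟨W, hW, hA⟩ := stit_wit j _ hn
      have hs : Sim (st σ) W := fun B => (sel_sim _ _ B).trans (hW.sim B)
      obtain ⟨g, hg, hz⟩ := zz_surj hs
      apply hA
      rw [← hz, ← ih σ g hσ hg]
      exact H g ⟨hg, by rw [hz]; exact hW⟩
    · intro hb g hg
      rw [ih σ g hσ hg.1]
      exact mem_ax _ .stitT ((hg.2 _).1 hb)
  | box A ih =>
    intro σ h hσ hh
    rw [JstitModel.Sat]
    constructor
    · intro H
      by_contra hn
      obtain ⟨W, hW, hA⟩ := box_wit _ hn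
      have hs : Sim (st σ) W := fun B => (sel_sim _ _ B).trans (hW B)
      obtain ⟨g, hg, hz⟩ := zz_surj hs
      apply hA
      rw [← hz, ← ih σ g hσ hg]
      exact H g hg
    · intro hb g hg
      rw [ih σ g hσ hg]
      exact mem_ax _ .boxT ((sel_sim _ _ _).1 ((sel_sim _ _ _).2 hb))
  | proves t A ih =>
    intro σ h hσ hh
    rw [JstitModel.Sat]
    have hk : ∀ X Y : MCS CS, Sim X Y → KLe X Y := fun X Y h A => (h.know A).1
    have hsym : Sim (zz σ h) (st σ) := fun B => (sel_sim _ _ B).symm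
    constructor
    · rintro ⟨H, _⟩
      exact (hk _ _ (sel_sim _ _)).prv (H σ (cR_refl σ) hσ)
    · intro H
      have h0 : Form.proves t A ∈ st σ := (hk _ _ hsym).prv H
      refine ⟨fun τ hτ hne => (hτ.resolve_left hσ).2.prv h0, fun τ g hr hg => ?_⟩
      rw [ih τ g (hr.resolve_left hσ).1 hg]
      exact hknow σ τ h g A hσ hr ((mem_and _ _ _).1 (mem_ax _ .a5 H)).2
  | know A ih =>
    intro σ h hσ hh
    rw [JstitModel.Sat]
    constructor
    · intro H
      by_contra hn
      obtain ⟨W, hW, hA⟩ := know_wit _ hn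
      obtain ⟨g, hg, hz⟩ := zz_surj (σ := [W]) (W := W) (fun _ => Iff.rfl)
      apply hA
      rw [← hz, ← ih [W] g (by simp) hg]
      refine H [W] g (Or.inr ⟨by simp, fun B hB => hW B ?_⟩) hg
      exact ((sel_sim _ _).know _).1 hB
    · intro hb τ g hr hg
      rw [ih τ g (hr.resolve_left hσ).1 hg]
      exact hknow σ τ h g A hσ hr hb
  | ann t => intro σ h hσ hh; exact cact_iff hσ h t

end Model

section Main

variable {Ag PVar PConst PropVar : Type} [Inhabited PropVar]

theorem cons_of_sat {CS : Set (Form Ag PVar PConst PropVar)} (hCS : IsConstSpec CS)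
    {Γ : Set (Form Ag PVar PConst PropVar)} {Mo : Type}
    (M : JstitModel Mo Ag PVar PConst PropVar)
    (hmix : M.toTemporalFrame.MixSucc) (hN : CSNormal CS M) {m h}
    (hh : h ∈ M.toTemporalFrame.H m) (hΓ : ∀ A ∈ Γ, M.Sat A m h) : CSConsistent CS Γ := by
  rintro ⟨A, L, hA, hL, hp⟩
  have := (sat_imp M _ _ _ _).1 (sound M hCS hN hmix hp m h hh) ((sat_andList M _ _ _ _).2 (by
    intro B hB
    rcases List.mem_cons.1 hB with rfl | hB
    · exact hΓ _ hA
    · exact hΓ _ (hL _ hB)))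
  exact sat_bot M _ _ this

theorem sat_of_cons [Finite Ag] {CS : Set (Form Ag PVar PConst PropVar)} (hCS : IsConstSpec CS)
    {Γ : Set (Form Ag PVar PConst PropVar)} (hc : CSConsistent CS Γ) :
    ∃ (Mo : Type) (M : JstitModel Mo Ag PVar PConst PropVar),
        M.toTemporalFrame.MixSucc ∧ M.toJstitFrame.Unirelational ∧ CSNormal CS M ∧
        ∃ m h, h ∈ M.toTemporalFrame.H m ∧ ∀ A ∈ Γ, M.Sat A m h := by
  have hd := exists_dull hCS
  haveI : Nonempty (MCS CS) := ⟨hd.choose⟩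
  have hder : ¬ Der CS Γ Form.bot := by
    intro hder
    have key : ∀ A, Der CS Γ A → ∃ L : List (Form Ag PVar PConst PropVar), (∀ B ∈ L, B ∈ Γ) ∧
        ∀ Y : MCS CS, (∀ B ∈ L, B ∈ Y) → A ∈ Y := by
      intro A hA
      induction hA with
      | @hyp A h => exact ⟨[A], by simpa using h, fun Y hY => hY A (by simp)⟩
      | thm h => exact ⟨[], by simp, fun Y _ => mem_proves Y h⟩
      | mp _ _ ih1 ih2 =>
        obtain ⟨L1, a1, b1⟩ := ih1
        obtain ⟨L2, a2, b2⟩ := ih2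
        refine ⟨L1 ++ L2, fun B hB => (List.mem_append.1 hB).elim (a1 B) (a2 B), fun Y hY =>
          (mem_imp Y _ _).1 (b1 Y fun B hB => hY B (List.mem_append_left _ hB))
            (b2 Y fun B hB => hY B (List.mem_append_right _ hB))⟩
    obtain ⟨L, hL, hY⟩ := key _ hder
    cases L with
    | nil => exact mem_bot hd.choose (hY _ (by simp))
    | cons A L =>
      refine hc ⟨A, L, hL A (by simp), fun B hB => hL B (List.mem_cons_of_mem _ hB), ?_⟩
      rw [proves_iff]
      intro Y
      rw [mem_imp, mem_andList]
      exact hY Y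
  obtain ⟨X, hX⟩ := lind hder
  obtain ⟨h, hh, hz⟩ := zz_surj (σ := [X]) (W := X) (fun _ => Iff.rfl)
  refine ⟨_, cM hd, lT_mix _, fun _ _ h => h, ?_, [X], h, hh, fun A hA => ?_⟩
  · intro c m A hA τ _ _
    exact mem_proves _ (.rcs hA)
  · rw [truth hd A [X] h (by simp) hh, hz]
    exact hX A hA

end Main

end JS

/-- Theorem 1: Γ is CS-consistent iff it is satisfiable in the class of
CS-normal jstit models based on mixed successor stit frames for Ag, iff it is
satisfiable in the subclass of unirelational such models. -/
theorem stmt7 {Ag PVar PConst PropVar : Type} [Finite Ag]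
    [Countable PVar] [Infinite PVar] [Countable PConst] [Infinite PConst]
    [Countable PropVar] [Infinite PropVar] [Inhabited PropVar]
    (CS : Set (Form Ag PVar PConst PropVar)) (hCS : IsConstSpec CS)
    (Γ : Set (Form Ag PVar PConst PropVar)) :
    (CSConsistent CS Γ ↔
      ∃ (Mo : Type) (M : JstitModel Mo Ag PVar PConst PropVar),
        M.toTemporalFrame.MixSucc ∧ CSNormal CS M ∧
        ∃ m h, h ∈ M.toTemporalFrame.H m ∧ ∀ A ∈ Γ, M.Sat A m h) ∧
    (CSConsistent CS Γ ↔
      ∃ (Mo : Type) (M : JstitModel Mo Ag PVar PConst PropVar),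
        M.toTemporalFrame.MixSucc ∧ M.toJstitFrame.Unirelational ∧ CSNormal CS M ∧
        ∃ m h, h ∈ M.toTemporalFrame.H m ∧ ∀ A ∈ Γ, M.Sat A m h) := by
  exact ⟨⟨fun h => by
      obtain ⟨Mo, M, h1, _, h3, h4⟩ := JS.sat_of_cons hCS h
      exact ⟨Mo, M, h1, h3, h4⟩,
    fun ⟨Mo, M, h1, h3, m, h, hh, hG⟩ => JS.cons_of_sat hCS M h1 h3 hh hG⟩,
    ⟨fun h => JS.sat_of_cons hCS h,
    fun ⟨Mo, M, h1, _, h3, m, h, hh, hG⟩ => JS.cons_of_sat hCS M h1 h3 hh hG⟩⟩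
end

section
/- Let CS be a constant specification, let Γ ⊆ Form^Ag, and let 𝓕 be a class of jstit frames for Ag with 𝓕^Ag_reg↓ ⊆ 𝓕 ⊆ 𝓕^Ag_reg (where 𝓕^Ag_reg↓ is the class of unirelational regular jstit frames for Ag). Then Γ is CS-consistent if and only if Γ is satisfiable in Mod_CS(𝓕). -/
set_option linter.unusedSectionVars false
set_option linter.unusedSimpArgs false

namespace JCompl

section PT

variable {Ag PVar PConst PropVar : Type} [Inhabited PropVar]

/-- Conjunction of a possibly empty list. -/
def conj : List (Form Ag PVar PConst PropVar) → Form Ag PVar PConst PropVar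
  | [] => Form.neg Form.bot
  | A :: L => Form.and A (conj L)

/-- Boolean homomorphisms. -/
def Hom (v : Form Ag PVar PConst PropVar → Bool) : Prop :=
  (∀ B C, v (Form.and B C) = (v B && v C)) ∧ (∀ B, v (Form.neg B) = !v B)

theorem Hom.conj {v : Form Ag PVar PConst PropVar → Bool} (hv : Hom v)
    (L : List (Form Ag PVar PConst PropVar)) : v (conj L) = true ↔ ∀ B ∈ L, v B = true := by
  induction L with
  | nil => simp [JCompl.conj, Form.bot, hv.1, hv.2]
  | cons A L ih => simp [JCompl.conj, hv.1, ih]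

theorem Hom.imp {v : Form Ag PVar PConst PropVar → Bool} (hv : Hom v)
    (A B : Form Ag PVar PConst PropVar) :
    v (Form.imp A B) = true ↔ (v A = true → v B = true) := by
  simp only [Form.imp, hv.1, hv.2]; cases v A <;> cases v B <;> simp

theorem Hom.neg {v : Form Ag PVar PConst PropVar → Bool} (hv : Hom v)
    (A : Form Ag PVar PConst PropVar) : v (Form.neg A) = true ↔ ¬ v A = true := by
  simp only [hv.2]; cases v A <;> simp

theorem Hom.and {v : Form Ag PVar PConst PropVar → Bool} (hv : Hom v)
    (A B : Form Ag PVar PConst PropVar) :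
    v (Form.and A B) = true ↔ (v A = true ∧ v B = true) := by
  simp only [hv.1]; cases v A <;> simp

variable (CS : Set (Form Ag PVar PConst PropVar))

variable {CS} in
theorem taut {A : Form Ag PVar PConst PropVar} (h : ∀ v, Hom v → v A = true) : Proves CS A :=
  Proves.ax (Ax.a0 fun v h1 h2 => h v ⟨h1, h2⟩)

variable {CS} in
theorem taut1 {A B : Form Ag PVar PConst PropVar} (hA : Proves CS A)
    (h : ∀ v, Hom v → v A = true → v B = true) : Proves CS B :=
  Proves.mp (taut (A := Form.imp A B) fun v hv => (hv.imp A B).2 (h v hv)) hA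

variable {CS} in
theorem taut2 {A B C : Form Ag PVar PConst PropVar} (hA : Proves CS A) (hB : Proves CS B)
    (h : ∀ v, Hom v → v A = true → v B = true → v C = true) : Proves CS C :=
  Proves.mp (taut1 (B := Form.imp B C) hA fun v hv ha => (hv.imp B C).2 (h v hv ha)) hB

/-- Consistency via lists. -/
def Con (Γ : Set (Form Ag PVar PConst PropVar)) : Prop :=
  ∀ L : List (Form Ag PVar PConst PropVar), (∀ B ∈ L, B ∈ Γ) → ¬ Proves CS (Form.neg (conj L))

/-- Maximal consistent sets. -/
def W : Type := { Γ : Set (Form Ag PVar PConst PropVar) // Con CS Γ ∧ ∀ A, A ∈ Γ ∨ Form.neg A ∈ Γ }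

instance : Membership (Form Ag PVar PConst PropVar) (W CS) := ⟨fun w A => A ∈ w.1⟩

variable {CS}

theorem con_iUnion {c : Set (Set (Form Ag PVar PConst PropVar))} (hc : IsChain (· ⊆ ·) c)
    (hne : c.Nonempty) (L : List (Form Ag PVar PConst PropVar))
    (hL : ∀ B ∈ L, B ∈ ⋃₀ c) : ∃ Γ ∈ c, ∀ B ∈ L, B ∈ Γ := by
  induction L with
  | nil => obtain ⟨Γ, h⟩ := hne; exact ⟨Γ, h, by simp⟩
  | cons A L ih =>
    obtain ⟨Γ, hΓ, h⟩ := ih (fun B hB => hL B (by simp [hB]))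
    obtain ⟨Δ, hΔ, h'⟩ := hL A (by simp)
    rcases hc.total hΓ hΔ with hs | hs
    · refine ⟨Δ, hΔ, ?_⟩
      intro B hB
      rcases List.mem_cons.1 hB with rfl | hB
      · exact h'
      · exact hs (h B hB)
    · refine ⟨Γ, hΓ, ?_⟩
      intro B hB
      rcases List.mem_cons.1 hB with rfl | hB
      · exact hs h'
      · exact h B hB

open Classical in
theorem lindenbaum {Γ : Set (Form Ag PVar PConst PropVar)} (hΓ : Con CS Γ) :
    ∃ w : W CS, ∀ A ∈ Γ, A ∈ w := by
  obtain ⟨Δ, hsub, hmax⟩ := zorn_subset_nonempty {Δ | Con CS Δ} (by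
    intro c hc hch hne
    refine ⟨⋃₀ c, ?_, fun s hs => Set.subset_sUnion_of_mem hs⟩
    intro L hL
    obtain ⟨Γ, h1, h2⟩ := con_iUnion hch hne L hL
    exact hc h1 L h2) Γ hΓ
  refine ⟨⟨Δ, hmax.prop, ?_⟩, fun A hA => hsub hA⟩
  intro A
  by_contra hcon
  push Not at hcon
  have key : ∀ A, A ∉ Δ → ∃ L, (∀ B ∈ L, B ∈ insert A Δ) ∧ Proves CS (Form.neg (conj L)) := by
    intro A hA
    by_contra hx
    push Not at hx
    have := hmax.eq_of_subset (t := insert A Δ) hx (Set.subset_insert _ _)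
    exact hA (this ▸ Set.mem_insert _ _)
  obtain ⟨L1, h1, p1⟩ := key _ hcon.1
  obtain ⟨L2, h2, p2⟩ := key _ hcon.2
  refine hmax.prop (L1.filter (· ≠ A) ++ L2.filter (· ≠ Form.neg A)) ?_ ?_
  · intro B hB
    simp only [List.mem_append, List.mem_filter, decide_eq_true_eq] at hB
    rcases hB with ⟨hB, hn⟩ | ⟨hB, hn⟩
    · exact (h1 B hB).resolve_left hn
    · exact (h2 B hB).resolve_left hn
  · refine taut2 p1 p2 ?_
    intro v hv
    simp only [hv.neg, hv.conj, List.mem_append, List.mem_filter, decide_eq_true_eq]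
    intro a1 a2 a3
    by_cases hA : v A = true
    · apply a1
      intro B hB
      by_cases hBA : B = A
      · rw [hBA]; exact hA
      · exact a3 B (Or.inl ⟨hB, hBA⟩)
    · apply a2
      intro B hB
      by_cases hBA : B = Form.neg A
      · rw [hBA]; exact (hv.neg _).2 hA
      · exact a3 B (Or.inr ⟨hB, hBA⟩)

variable (w : W CS)

theorem mem_closed {A : Form Ag PVar PConst PropVar} (L : List (Form Ag PVar PConst PropVar))
    (hL : ∀ B ∈ L, B ∈ w) (h : Proves CS (Form.imp (conj L) A)) : A ∈ w := by
  rcases w.2.2 A with hA | hA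
  · exact hA
  exfalso
  refine w.2.1 (Form.neg A :: L) ?_ (taut1 h ?_)
  · intro B hB
    rcases List.mem_cons.1 hB with rfl | hB
    · exact hA
    · exact hL B hB
  · intro v hv
    rw [hv.imp, hv.neg]
    intro h1 h2
    have h3 := (hv.conj _).1 h2
    have := h3 (Form.neg A) (by simp)
    rw [hv.neg] at this
    exact this (h1 ((hv.conj _).2 fun B hB => h3 B (by simp [hB])))

variable {w}

theorem mem_thm {A : Form Ag PVar PConst PropVar} (h : Proves CS A) : A ∈ w :=
  mem_closed w [] (by simp) (taut1 h fun v hv h => (hv.imp _ _).2 fun _ => h)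

theorem mem_neg {A : Form Ag PVar PConst PropVar} : Form.neg A ∈ w ↔ A ∉ w := by
  constructor
  · intro h h'
    refine w.2.1 [A, Form.neg A] ?_ (taut fun v hv => ?_)
    · intro B hB
      simp only [List.mem_cons, List.not_mem_nil, or_false] at hB
      rcases hB with rfl | rfl
      · exact h'
      · exact h
    · rw [hv.neg, hv.conj]
      intro h
      have h1 := h A (by simp)
      have h2 := h (Form.neg A) (by simp)
      rw [hv.neg] at h2
      exact h2 h1
  · intro h
    exact (w.2.2 A).resolve_left h

theorem mem_and {A B : Form Ag PVar PConst PropVar} : Form.and A B ∈ w ↔ A ∈ w ∧ B ∈ w := by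
  constructor
  · intro h
    constructor
    · refine mem_closed w [Form.and A B] (by simpa using h) (taut fun v hv => ?_)
      rw [hv.imp, hv.conj]; simp [hv.and]; tauto
    · refine mem_closed w [Form.and A B] (by simpa using h) (taut fun v hv => ?_)
      rw [hv.imp, hv.conj]; simp [hv.and]
  · rintro ⟨h1, h2⟩
    refine mem_closed w [A, B] (by simp [h1, h2]) (taut fun v hv => ?_)
    rw [hv.imp, hv.conj]; simp [hv.and]

theorem mem_imp {A B : Form Ag PVar PConst PropVar} :
    Form.imp A B ∈ w ↔ (A ∈ w → B ∈ w) := by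
  simp only [Form.imp, mem_neg, mem_and]; tauto

theorem mem_or {A B : Form Ag PVar PConst PropVar} :
    Form.or A B ∈ w ↔ (A ∈ w ∨ B ∈ w) := by
  simp only [Form.or, mem_neg, mem_and]; tauto

theorem mem_bot : ¬ (Form.bot : Form Ag PVar PConst PropVar) ∈ w := by
  simp only [Form.bot, mem_neg, mem_and]; tauto

theorem mem_conj {L : List (Form Ag PVar PConst PropVar)} :
    conj L ∈ w ↔ ∀ B ∈ L, B ∈ w := by
  induction L with
  | nil => simp [conj, mem_neg, mem_bot]
  | cons A L ih => simp [conj, mem_and, ih]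

theorem mem_andList {A : Form Ag PVar PConst PropVar} {L : List (Form Ag PVar PConst PropVar)} :
    andList A L ∈ w ↔ A ∈ w ∧ ∀ B ∈ L, B ∈ w := by
  induction L generalizing A with
  | nil => simp [andList]
  | cons B L ih => simp [andList, mem_and, ih]

theorem mem_bigOr {L : List (Form Ag PVar PConst PropVar)} :
    bigOr L ∈ w ↔ ∃ B ∈ L, B ∈ w := by
  induction L with
  | nil => simp [bigOr, mem_bot]
  | cons A L ih =>
    cases L with
    | nil => simp [bigOr]
    | cons B L => rw [bigOr, mem_or, ih]; simp

theorem mem_ax {A B : Form Ag PVar PConst PropVar} (h : Ax (Form.imp A B)) (hA : A ∈ w) : B ∈ w :=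
  mem_imp.1 (mem_thm (Proves.ax h)) hA

theorem proves_of {A : Form Ag PVar PConst PropVar} (h : ∀ w : W CS, A ∈ w) : Proves CS A := by
  by_contra hA
  obtain ⟨w, hw⟩ := lindenbaum (CS := CS) (Γ := {Form.neg A}) (by
    intro L hL hp
    refine hA (taut1 hp fun v hv => ?_)
    rw [hv.neg, hv.conj]
    intro h
    by_contra hn
    apply h
    intro B hB
    rw [hL B hB, hv.neg]
    exact hn)
  exact mem_neg.1 (hw _ rfl) (h w)

theorem con_of {Γ : Set (Form Ag PVar PConst PropVar)}
    (h : ∀ L : List (Form Ag PVar PConst PropVar), (∀ B ∈ L, B ∈ Γ) →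
      ∃ w : W CS, ∀ B ∈ L, B ∈ w) : Con CS Γ := by
  intro L hL hp
  obtain ⟨w, hw⟩ := h L hL
  exact mem_neg.1 (mem_thm hp) (mem_conj.2 hw)

/-- A normal operator. -/
structure Normal (CS : Set (Form Ag PVar PConst PropVar))
    (M : Form Ag PVar PConst PropVar → Form Ag PVar PConst PropVar) : Prop where
  k : ∀ A B, Proves CS (Form.imp (M (Form.imp A B)) (Form.imp (M A) (M B)))
  nec : ∀ A, Proves CS A → Proves CS (M A)

theorem Normal.mono {M : Form Ag PVar PConst PropVar → Form Ag PVar PConst PropVar}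
    (hM : Normal CS M) {A B : Form Ag PVar PConst PropVar} (h : ∀ w : W CS, A ∈ w → B ∈ w)
    (hA : M A ∈ w) : M B ∈ w := by
  have h1 : Proves CS (Form.imp A B) := proves_of fun w => mem_imp.2 (h w)
  exact mem_imp.1 (mem_imp.1 (mem_thm (hM.k A B)) (mem_thm (hM.nec _ h1))) hA

theorem Normal.and {M : Form Ag PVar PConst PropVar → Form Ag PVar PConst PropVar}
    (hM : Normal CS M) {A B : Form Ag PVar PConst PropVar} :
    M (Form.and A B) ∈ w ↔ M A ∈ w ∧ M B ∈ w := by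
  constructor
  · intro h
    exact ⟨hM.mono (fun w h => (mem_and.1 h).1) h, hM.mono (fun w h => (mem_and.1 h).2) h⟩
  · rintro ⟨h1, h2⟩
    have : M (Form.imp B (Form.and A B)) ∈ w :=
      hM.mono (fun w h => mem_imp.2 fun h' => mem_and.2 ⟨h, h'⟩) h1
    exact mem_imp.1 (mem_imp.1 (mem_thm (hM.k _ _)) this) h2

theorem Normal.conj {M : Form Ag PVar PConst PropVar → Form Ag PVar PConst PropVar}
    (hM : Normal CS M) {L : List (Form Ag PVar PConst PropVar)}
    (h : ∀ B ∈ L, M B ∈ w) : M (conj L) ∈ w := by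
  induction L with
  | nil => exact mem_thm (hM.nec _ (proves_of fun w => mem_neg.2 mem_bot))
  | cons A L ih =>
    exact hM.and.2 ⟨h A (by simp), ih fun B hB => h B (by simp [hB])⟩

open Classical in
theorem Normal.exists {M : Form Ag PVar PConst PropVar → Form Ag PVar PConst PropVar}
    (hM : Normal CS M) {A : Form Ag PVar PConst PropVar} (hA : M A ∉ w) :
    ∃ v : W CS, (∀ B, M B ∈ w → B ∈ v) ∧ A ∉ v := by
  obtain ⟨v, hv⟩ := lindenbaum (CS := CS) (Γ := {B | M B ∈ w ∨ B = Form.neg A}) (by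
    apply con_of
    intro L hL
    by_contra hn
    push Not at hn
    apply hA
    refine hM.mono ?_ (hM.conj (L := L.filter (· ≠ Form.neg A)) ?_)
    · intro v hv
      by_contra hAv
      obtain ⟨B, hB, hBv⟩ := hn v
      apply hBv
      by_cases hBA : B = Form.neg A
      · rw [hBA]; exact mem_neg.2 hAv
      · exact mem_conj.1 hv B (by simp [hB, hBA])
    · intro B hB
      simp only [List.mem_filter, decide_eq_true_eq] at hB
      exact (hL B hB.1).resolve_right hB.2)
  exact ⟨v, fun B hB => hv B (Or.inl hB), mem_neg.1 (hv _ (Or.inr rfl))⟩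

theorem know_box {A : Form Ag PVar PConst PropVar} (h : Form.know A ∈ w) : Form.box A ∈ w :=
  mem_ax Ax.knowT (mem_ax Ax.boxT (mem_ax Ax.a8 h))

theorem normal_know : Normal CS (Form.know) := ⟨fun _ _ => Proves.ax Ax.knowK, fun _ => Proves.nec⟩

theorem normal_box : Normal CS (Form.box) :=
  ⟨fun _ _ => Proves.ax Ax.boxK, fun _ h => proves_of fun _ => know_box (mem_thm (Proves.nec h))⟩

theorem normal_stit (j : Ag) : Normal CS (Form.stit j) :=
  ⟨fun _ _ => Proves.ax Ax.stitK,
   fun _ h => proves_of fun _ => mem_ax Ax.a2 (mem_thm (normal_box.nec _ h))⟩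

/-- Historical equivalence. -/
def Eqv (w v : W CS) : Prop := ∀ A : Form Ag PVar PConst PropVar, Form.box A ∈ w ↔ Form.box A ∈ v

/-- Choice equivalence. -/
def Sim (j : Ag) (w v : W CS) : Prop :=
  ∀ A : Form Ag PVar PConst PropVar, Form.stit j A ∈ w ↔ Form.stit j A ∈ v

/-- Epistemic accessibility. -/
def RK (w v : W CS) : Prop :=
  ∀ A : Form Ag PVar PConst PropVar, Form.know A ∈ w → Form.know A ∈ v

theorem eqv_of {v : W CS}
    (h : ∀ A : Form Ag PVar PConst PropVar, Form.box A ∈ w → Form.box A ∈ v) : Eqv w v := by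
  intro A
  refine ⟨h A, fun hv => ?_⟩
  by_contra hn
  exact mem_neg.1 (mem_ax Ax.boxT (h _ (mem_ax Ax.box5 (mem_neg.2 hn)))) hv

theorem sim_of {j : Ag} {v : W CS}
    (h : ∀ A : Form Ag PVar PConst PropVar, Form.stit j A ∈ w → Form.stit j A ∈ v) :
    Sim j w v := by
  intro A
  refine ⟨h A, fun hv => ?_⟩
  by_contra hn
  exact mem_neg.1 (mem_ax Ax.stitT (h _ (mem_ax Ax.stit5 (mem_neg.2 hn)))) hv

theorem box_ex {A : Form Ag PVar PConst PropVar} (h : Form.box A ∉ w) :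
    ∃ v : W CS, Eqv w v ∧ A ∉ v := by
  obtain ⟨v, h1, h2⟩ := normal_box.exists h
  exact ⟨v, eqv_of fun B hB => h1 _ (mem_ax Ax.box4 hB), h2⟩

theorem stit_ex {j : Ag} {A : Form Ag PVar PConst PropVar} (h : Form.stit j A ∉ w) :
    ∃ v : W CS, Eqv w v ∧ Sim j w v ∧ A ∉ v := by
  obtain ⟨v, h1, h2⟩ := (normal_stit j).exists h
  exact ⟨v, eqv_of fun B hB => h1 _ (mem_ax Ax.a2 (mem_ax Ax.box4 hB)),
    sim_of fun B hB => h1 _ (mem_ax Ax.stit4 hB), h2⟩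

theorem know_ex {A : Form Ag PVar PConst PropVar} (h : Form.know A ∉ w) :
    ∃ v : W CS, RK w v ∧ A ∉ v := by
  obtain ⟨v, h1, h2⟩ := normal_know.exists h
  exact ⟨v, fun B hB => h1 _ (mem_ax Ax.know4 hB), h2⟩

theorem Eqv.know {v : W CS} (h : Eqv w v) {A : Form Ag PVar PConst PropVar}
    (hA : Form.know A ∈ w) : Form.know A ∈ v :=
  mem_ax Ax.boxT ((h _).1 (know_box (mem_ax Ax.know4 hA)))

theorem proves_know {t : Pol PVar PConst} {A : Form Ag PVar PConst PropVar}
    (h : Form.proves t A ∈ w) : Form.know (Form.proves t A) ∈ w :=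
  (mem_and.1 (mem_ax Ax.a5 (mem_and.1 (mem_ax Ax.a5 h)).1)).2

theorem RK.proves {v : W CS} (h : RK w v) {t : Pol PVar PConst}
    {A : Form Ag PVar PConst PropVar}
    (hA : Form.proves t A ∈ w) : Form.proves t A ∈ v :=
  mem_ax Ax.knowT (h _ (proves_know hA))

theorem Eqv.rk {v : W CS} (h : Eqv w v) : RK w v := fun _ hA => h.know hA

theorem Eqv.symm {v : W CS} (h : Eqv w v) : Eqv v w := fun A => (h A).symm

/-- The successor lemma, from the rule (R_D). -/
theorem succ_ex (w : W CS) : ∃ v : W CS, RK w v ∧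
    ∀ t : Pol PVar PConst, Form.box (Form.ann t) ∈ v ↔ Form.ann t ∈ w := by
  obtain ⟨v, hv⟩ := lindenbaum (CS := CS)
    (Γ := {B | (∃ A, B = Form.know A ∧ Form.know A ∈ w) ∨
      (∃ t, B = Form.box (Form.ann t) ∧ Form.ann t ∈ w) ∨
      (∃ t, B = Form.neg (Form.box (Form.ann t)) ∧ Form.ann t ∉ w)}) (by
    apply con_of
    intro L hL
    have key : ∃ (A : Form Ag PVar PConst PropVar) (ts ss : List (Pol PVar PConst)),
        Form.know A ∈ w ∧ (∀ t ∈ ts, Form.ann t ∈ w) ∧ (∀ t ∈ ss, Form.ann t ∉ w) ∧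
        ∀ v : W CS, Form.know A ∈ v → (∀ t ∈ ts, Form.box (Form.ann t) ∈ v) →
          (∀ t ∈ ss, Form.box (Form.ann t) ∉ v) → ∀ B ∈ L, B ∈ v := by
      induction L with
      | nil =>
        exact ⟨Form.neg Form.bot, [], [],
          mem_thm (Proves.nec (proves_of fun _ => mem_neg.2 mem_bot)), by simp, by simp, by simp⟩
      | cons B L ih =>
        obtain ⟨A, ts, ss, h1, h2, h3, h4⟩ := ih fun B hB => hL B (by simp [hB])
        rcases hL B (by simp) with ⟨A', rfl, hA'⟩ | ⟨t, rfl, ht⟩ | ⟨t, rfl, ht⟩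
        · refine ⟨Form.and A A', ts, ss, normal_know.and.2 ⟨h1, hA'⟩, h2, h3, ?_⟩
          intro v a1 a2 a3 B hB
          rw [normal_know.and] at a1
          rcases List.mem_cons.1 hB with rfl | hB
          · exact a1.2
          · exact h4 v a1.1 a2 a3 B hB
        · refine ⟨A, t :: ts, ss, h1, by simpa using ⟨ht, h2⟩, h3, ?_⟩
          intro v a1 a2 a3 B hB
          rcases List.mem_cons.1 hB with rfl | hB
          · exact a2 t (by simp)
          · exact h4 v a1 (fun t ht => a2 t (by simp [ht])) a3 B hB
        · refine ⟨A, ts, t :: ss, h1, h2, by simpa using ⟨ht, h3⟩, ?_⟩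
          intro v a1 a2 a3 B hB
          rcases List.mem_cons.1 hB with rfl | hB
          · exact mem_neg.2 (a3 t (by simp))
          · exact h4 v a1 a2 (fun t ht => a3 t (by simp [ht])) B hB
    obtain ⟨A, ts, ss, h1, h2, h3, h4⟩ := key
    by_contra hn
    by_cases hne : ts ++ ss = []
    · obtain ⟨rfl, rfl⟩ := List.append_eq_nil_iff.1 hne
      exact hn ⟨w, h4 w h1 (by simp) (by simp)⟩
    have hp := Proves.rd (CS := CS) (A := A) (ts := ts) (ss := ss) hne (by
      apply proves_of
      intro v
      rw [mem_imp, mem_bigOr]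
      intro hA
      by_contra hno
      push Not at hno
      refine hn ⟨v, h4 v hA ?_ ?_⟩
      · intro t ht
        have := hno (Form.neg (Form.box (Form.ann t))) (by
          exact List.mem_append_left _ (List.mem_map.2 ⟨t, ht, rfl⟩))
        rw [mem_neg] at this
        exact not_not.1 this
      · intro t ht
        exact hno _ (List.mem_append_right _ (List.mem_map.2 ⟨t, ht, rfl⟩)))
    have := mem_bigOr.1 (mem_imp.1 (mem_thm (w := w) hp) h1)
    obtain ⟨B, hB, hBw⟩ := this
    rcases List.mem_append.1 hB with hB | hB
    · obtain ⟨t, ht, rfl⟩ := List.mem_map.1 hB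
      exact mem_neg.1 hBw (h2 t ht)
    · obtain ⟨t, ht, rfl⟩ := List.mem_map.1 hB
      exact h3 t ht hBw)
  refine ⟨v, fun A hA => hv _ (Or.inl ⟨A, rfl, hA⟩), fun t => ⟨fun h => ?_, fun h => ?_⟩⟩
  · by_contra hn
    exact mem_neg.1 (hv _ (Or.inr (Or.inr ⟨t, rfl, hn⟩))) h
  · exact hv _ (Or.inr (Or.inl ⟨t, rfl, h⟩))

/-- Independence of agents for maximal consistent sets. -/
theorem indep_ex [Finite Ag] (w : W CS) (f : Ag → W CS) (hf : ∀ j, Eqv w (f j)) :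
    ∃ v : W CS, Eqv w v ∧ ∀ j, Sim j (f j) v := by
  classical
  have := Fintype.ofFinite Ag
  obtain ⟨v, hv⟩ := lindenbaum (CS := CS)
    (Γ := {B | (∃ A, B = Form.box A ∧ Form.box A ∈ w) ∨
      (∃ j A, B = Form.stit j A ∧ Form.stit j A ∈ f j)}) (by
    apply con_of
    intro L hL
    have key : ∃ (A : Form Ag PVar PConst PropVar) (g : Ag → Form Ag PVar PConst PropVar),
        Form.box A ∈ w ∧ (∀ j, Form.stit j (g j) ∈ f j) ∧
        ∀ v : W CS, Form.box A ∈ v → (∀ j, Form.stit j (g j) ∈ v) → ∀ B ∈ L, B ∈ v := by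
      induction L with
      | nil =>
        have hT : Proves CS (Form.neg Form.bot) := proves_of fun _ => mem_neg.2 mem_bot
        exact ⟨Form.neg Form.bot, fun _ => Form.neg Form.bot,
          mem_thm (normal_box.nec _ hT), fun j => mem_thm ((normal_stit j).nec _ hT), by simp⟩
      | cons B L ih =>
        obtain ⟨A, g, h1, h2, h3⟩ := ih fun B hB => hL B (by simp [hB])
        rcases hL B (by simp) with ⟨A', rfl, hA'⟩ | ⟨j, A', rfl, hA'⟩
        · refine ⟨Form.and A A', g, normal_box.and.2 ⟨h1, hA'⟩, h2, ?_⟩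
          intro v a1 a2 B hB
          rw [normal_box.and] at a1
          rcases List.mem_cons.1 hB with rfl | hB
          · exact a1.2
          · exact h3 v a1.1 a2 B hB
        · refine ⟨A, fun i => if i = j then Form.and (g i) A' else g i, h1, ?_, ?_⟩
          · intro i
            by_cases hij : i = j
            · subst hij
              simp only [if_true]
              exact (normal_stit i).and.2 ⟨h2 i, hA'⟩
            · simp only [if_neg hij]
              exact h2 i
          · intro v a1 a2 B hB
            rcases List.mem_cons.1 hB with rfl | hB
            · have := a2 j
              simp only [if_true] at this
              exact ((normal_stit j).and.1 this).2
            · refine h3 v a1 ?_ B hB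
              intro i
              have := a2 i
              by_cases hij : i = j
              · subst hij
                simp only [if_true] at this
                exact ((normal_stit i).and.1 this).1
              · simpa only [if_neg hij] using this
    obtain ⟨A, g, h1, h2, h3⟩ := key
    have hd : ∀ j, Form.dia (Form.stit j (g j)) ∈ w := by
      intro j
      rw [Form.dia, mem_neg, hf j]
      intro h
      exact mem_neg.1 (mem_ax Ax.boxT h) (h2 j)
    rcases hl : (Finset.univ : Finset Ag).toList with _ | ⟨i, l⟩
    · refine ⟨w, h3 w h1 fun j => ?_⟩
      have : j ∈ (Finset.univ : Finset Ag).toList := by simp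
      rw [hl] at this
      simp at this
    · have hnd := (Finset.univ : Finset Ag).nodup_toList
      rw [hl] at hnd
      have hax := Ax.a3 (p := (i, g i)) (L := l.map fun j => (j, g j)) (by
        simpa [Function.comp_def] using hnd)
      have hdia := mem_ax (w := w) hax (by
        rw [mem_andList]
        refine ⟨hd i, ?_⟩
        intro B hB
        simp only [List.map_map, List.mem_map] at hB
        obtain ⟨j, _, rfl⟩ := hB
        exact hd j)
      rw [Form.dia, mem_neg] at hdia
      obtain ⟨v, hv1, hv2⟩ := box_ex hdia
      rw [mem_neg, not_not, mem_andList] at hv2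
      refine ⟨v, h3 v ((hv1 _).1 h1) fun j => ?_⟩
      have : j ∈ (Finset.univ : Finset Ag).toList := by simp
      rw [hl] at this
      rcases List.mem_cons.1 this with rfl | hj
      · exact hv2.1
      · refine hv2.2 _ ?_
        simp only [List.map_map, List.mem_map]
        exact ⟨j, hj, rfl⟩)
  exact ⟨v, eqv_of fun A hA => hv _ (Or.inl ⟨A, rfl, hA⟩),
    fun j => sim_of fun A hA => hv _ (Or.inr ⟨j, A, rfl, hA⟩)⟩

end PT

end JCompl

namespace JCompl

section Temp

variable {Mo : Type} {T : TemporalFrame Mo}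

theorem hist_mem {h : Set Mo} (hh : T.IsHistory h) {y : Mo}
    (hy : ∀ x ∈ h, T.le y x ∨ T.le x y) : y ∈ h := by
  have := hh.2 (insert y h) (hh.1.insert fun b hb _ => hy b hb) (Set.subset_insert _ _)
  rw [← this]
  exact Set.mem_insert _ _

theorem hist_total {h : Set Mo} (hh : T.IsHistory h) {x y : Mo} (hx : x ∈ h) (hy : y ∈ h) :
    T.le x y ∨ T.le y x := by
  by_cases hxy : x = y
  · subst hxy; exact Or.inl (T.le_refl _)
  · exact hh.1 hx hy hxy

theorem hist_down {h : Set Mo} (hh : T.IsHistory h) {x y : Mo} (hx : x ∈ h) (hyx : T.le y x) :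
    y ∈ h := by
  apply hist_mem hh
  intro z hz
  rcases hist_total hh hx hz with h1 | h1
  · exact Or.inl (T.le_trans hyx h1)
  · exact T.no_backward x y z hyx h1

theorem hist_above {h h' : Set Mo} {m : Mo} (hh : h ∈ T.H m) (hh' : h' ∈ T.H m) (hne : h ≠ h') :
    ∃ m1 ∈ h, T.lt m m1 := by
  by_contra hn
  push Not at hn
  have hs : h ⊆ h' := by
    intro x hx
    rcases hist_total hh.1 hh.2 hx with h1 | h1
    · by_cases hmx : m = x
      · subst hmx; exact hh'.2
      · exact absurd ⟨h1, hmx⟩ (hn x hx)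
    · exact hist_down hh'.1 hh'.2 h1
  exact hne (hh.1.2 h' hh'.1.1 hs).symm

theorem H_down {h : Set Mo} {m m1 : Mo} (hh : h ∈ T.H m1) (hl : T.le m m1) : h ∈ T.H m :=
  ⟨hh.1, hist_down hh.1 hh.2 hl⟩

theorem lt_trans_le {a b c : Mo} (h1 : T.lt a b) (h2 : T.le b c) : T.lt a c := by
  refine ⟨T.le_trans h1.1 h2, ?_⟩
  rintro rfl
  exact h1.2 (T.le_antisymm h1.1 h2)

end Temp

section Sound

variable {Mo Ag PVar PConst PropVar : Type} (M : JstitModel Mo Ag PVar PConst PropVar)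

theorem act_next {m m2 : Mo} {h : Set Mo} {t : Pol PVar PConst}
    (hn : M.toTemporalFrame.Next m m2) (hh : h ∈ M.toTemporalFrame.H m2)
    (ht : t ∈ M.ActM m2) : t ∈ M.act m h := by
  obtain ⟨m', g, h1, h2, h3⟩ := M.no_new m2 t ht
  have hg : g ∈ M.toTemporalFrame.H m := H_down h2 hn.1.1
  have hm : t ∈ M.act m g := by
    by_cases he : m' = m
    · rwa [← he]
    · exact M.expansion m m' g ⟨hn.2 m' h1, he⟩ hg h3
  rwa [M.divide m h g (H_down hh hn.1.1) hg ⟨m2, hn.1, hh.2, h2.2⟩]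

theorem act_up {m m0 : Mo} {g : Set Mo} {t : Pol PVar PConst}
    (hl : M.toTemporalFrame.lt m m0) (hg : g ∈ M.toTemporalFrame.H m0)
    (ht : t ∈ M.act m g) : t ∈ M.ActM m0 := by
  intro g' hg'
  apply M.expansion m0 m g' hl hg'
  rwa [M.divide m g' g (H_down hg' hl.1) (H_down hg hl.1) ⟨m0, hl, hg'.2, hg.2⟩]

theorem actM_mono {m m' : Mo} {t : Pol PVar PConst} (hR : M.Re m m') (h : t ∈ M.ActM m) :
    t ∈ M.ActM m' := M.transparent m m' t hR h

theorem le_Re {m m' : Mo} (h : M.le m m') : M.Re m m' := M.R_sub_Re (M.le_sub_R h)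

theorem act_dense {m1 : Mo} (s : Pol PVar PConst) (ts : List (Pol PVar PConst))
    (hS : ∀ t ∈ s :: ts, t ∈ M.ActM m1)
    (hd : ∀ m2, M.toTemporalFrame.lt m2 m1 →
        ∃ m3, M.toTemporalFrame.lt m2 m3 ∧ M.toTemporalFrame.lt m3 m1) :
    ∃ m4, M.toTemporalFrame.lt m4 m1 ∧ ∀ t ∈ s :: ts, t ∈ M.ActM m4 := by
  have one : ∀ t, t ∈ M.ActM m1 → ∃ m4, M.toTemporalFrame.lt m4 m1 ∧ t ∈ M.ActM m4 := by
    intro t ht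
    obtain ⟨m', g, h1, h2, h3⟩ := M.no_new m1 t ht
    obtain ⟨m3, h4, h5⟩ := hd m' h1
    exact ⟨m3, h5, act_up M h4 (H_down h2 h5.1) h3⟩
  induction ts with
  | nil =>
    obtain ⟨m4, h1, h2⟩ := one s (hS s (by simp))
    exact ⟨m4, h1, by simpa using h2⟩
  | cons t ts ih =>
    obtain ⟨m4, h1, h2⟩ := one t (hS t (by simp))
    obtain ⟨m5, h3, h4⟩ := ih (fun t' ht' => hS t' (by
      simp only [List.mem_cons] at ht' ⊢; tauto))
    rcases M.no_backward m1 m4 m5 h1.1 h3.1 with hl | hl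
    · refine ⟨m5, h3, fun t' ht' => ?_⟩
      simp only [List.mem_cons] at ht' h4
      rcases ht' with rfl | rfl | ht'
      · exact h4 _ (Or.inl rfl)
      · exact actM_mono M (le_Re M hl) h2
      · exact h4 _ (Or.inr ht')
    · refine ⟨m4, h1, fun t' ht' => ?_⟩
      simp only [List.mem_cons] at ht' h4
      rcases ht' with rfl | rfl | ht'
      · exact actM_mono M (le_Re M hl) (h4 _ (Or.inl rfl))
      · exact h2
      · exact actM_mono M (le_Re M hl) (h4 _ (Or.inr ht'))

theorem rd_core (hreg : M.toJstitFrame.Regular) (A : Form Ag PVar PConst PropVar)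
    (ts ss : List (Pol PVar PConst))
    (hyp : ∀ m h, h ∈ M.toTemporalFrame.H m → M.Sat (Form.know A) m h →
      (∃ t ∈ ts, t ∉ M.ActM m) ∨ ∃ s ∈ ss, s ∈ M.ActM m)
    (m : Mo) (h : Set Mo) (hh : h ∈ M.toTemporalFrame.H m) (hK : M.Sat (Form.know A) m h)
    (hts : ∀ t ∈ ts, t ∈ M.act m h) (hss : ∀ s ∈ ss, s ∉ M.act m h) : False := by
  rcases hyp m h hh hK with ⟨t, ht, hta⟩ | ⟨s, hs, hsa⟩
  swap
  · exact hss s hs (hsa h hh)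
  obtain ⟨h', hh', ht'⟩ : ∃ h' ∈ M.toTemporalFrame.H m, t ∉ M.act m h' := by
    by_contra hn
    push Not at hn
    exact hta hn
  obtain ⟨m1, hm1, hl⟩ := hist_above hh hh' (by rintro rfl; exact ht' (hts t ht))
  have up : ∀ m0, M.toTemporalFrame.lt m m0 → M.le m0 m1 →
      (∀ t ∈ ts, t ∈ M.ActM m0) ∧ ∃ s ∈ ss, s ∈ M.ActM m0 := by
    intro m0 h1 h2
    have hm0 : h ∈ M.toTemporalFrame.H m0 := H_down ⟨hh.1, hm1⟩ h2
    have ht0 : ∀ t ∈ ts, t ∈ M.ActM m0 := fun t ht => act_up M h1 hm0 (hts t ht)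
    refine ⟨ht0, ?_⟩
    rcases hyp m0 h hm0 (by
      intro m' g hR hg
      exact hK m' g (M.R_trans (M.le_sub_R h1.1) hR) hg) with ⟨t, ht, hta⟩ | hx
    · exact absurd (ht0 t ht) hta
    · exact hx
  have common : ∃ s ∈ ss, ∀ m0, M.toTemporalFrame.lt m m0 → M.le m0 m1 → s ∈ M.ActM m0 := by
    by_contra hn
    push Not at hn
    have : ∀ l : List (Pol PVar PConst), (∀ s ∈ l, s ∈ ss) →
        ∃ m0, M.toTemporalFrame.lt m m0 ∧ M.le m0 m1 ∧ ∀ s ∈ l, s ∉ M.ActM m0 := by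
      intro l hl'
      induction l with
      | nil => exact ⟨m1, hl, M.le_refl _, by simp⟩
      | cons s l ih =>
        obtain ⟨m0, a1, a2, a3⟩ := ih fun s hs => hl' s (by simp [hs])
        obtain ⟨m0', b1, b2, b3⟩ := hn s (hl' s (by simp))
        rcases M.no_backward m1 m0 m0' a2 b2 with hle | hle
        · refine ⟨m0, a1, a2, fun s' hs' => ?_⟩
          rcases List.mem_cons.1 hs' with rfl | hs'
          · exact fun hx => b3 (actM_mono M (le_Re M hle) hx)
          · exact a3 s' hs'
        · refine ⟨m0', b1, b2, fun s' hs' => ?_⟩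
          rcases List.mem_cons.1 hs' with rfl | hs'
          · exact b3
          · exact fun hx => a3 s' hs' (actM_mono M (le_Re M hle) hx)
    obtain ⟨m0, a1, a2, a3⟩ := this ss (fun _ h => h)
    obtain ⟨s, hs, hs'⟩ := (up m0 a1 a2).2
    exact a3 s hs hs'
  obtain ⟨s, hs, hsc⟩ := common
  obtain ⟨m2, hm2, hn2⟩ : ∃ m2, M.le m2 m1 ∧ M.toTemporalFrame.Next m m2 := by
    apply hreg m m1 hl
    refine ⟨{x | ∀ t ∈ s :: ts, t ∈ M.ActM x}, ?_, ?_, h', hh', ?_, ?_⟩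
    · intro m0 h1 h2
      refine ⟨?_, ?_, ?_, ?_⟩
      · intro t ht
        rcases List.mem_cons.1 ht with rfl | ht
        · exact hsc m0 h1 h2
        · exact (up m0 h1 h2).1 t ht
      · intro x y hx hR t ht
        exact actM_mono M hR (hx t ht)
      · intro x hx t ht g hg
        obtain ⟨y, hy1, hy2, hy3⟩ := hx g hg
        exact act_next M hy2 ⟨hg.1, hy1⟩ (hy3 t ht)
      · intro x hx hd
        exact act_dense M s ts hx hd
    · intro hm
      exact hss s hs (hm s (by simp) h hh)
    · intro g hg hu
      apply ht'
      have hgm := H_down hg hl.1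
      rw [M.divide m h' g hh' hgm hu, M.divide m g h hgm hh ⟨m1, hl, hg.2, hm1⟩]
      exact hts t ht
    · intro m' hm' hn hS
      exact ht' (act_next M hn ⟨hh'.1, hm'⟩ (hS t (by simp [ht])))
  exact hss s hs (act_next M hn2 (H_down ⟨hh.1, hm1⟩ hm2) (hsc m2 hn2.1 hm2))

theorem sat_imp {A B : Form Ag PVar PConst PropVar} {m : Mo} {h : Set Mo} :
    M.Sat (Form.imp A B) m h ↔ (M.Sat A m h → M.Sat B m h) := by
  simp only [Form.imp, JstitModel.Sat]; tauto

theorem sat_or {A B : Form Ag PVar PConst PropVar} {m : Mo} {h : Set Mo} :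
    M.Sat (Form.or A B) m h ↔ (M.Sat A m h ∨ M.Sat B m h) := by
  simp only [Form.or, JstitModel.Sat]; tauto

theorem sat_dia {A : Form Ag PVar PConst PropVar} {m : Mo} {h : Set Mo} :
    M.Sat (Form.dia A) m h ↔ ∃ h' ∈ M.toTemporalFrame.H m, M.Sat A m h' := by
  simp only [Form.dia, JstitModel.Sat]; push Not; rfl

theorem sat_andList {A : Form Ag PVar PConst PropVar} {L : List (Form Ag PVar PConst PropVar)}
    {m : Mo} {h : Set Mo} :
    M.Sat (andList A L) m h ↔ M.Sat A m h ∧ ∀ B ∈ L, M.Sat B m h := by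
  induction L generalizing A with
  | nil => simp [andList]
  | cons B L ih => simp [andList, JstitModel.Sat, ih]

theorem sat_bot [Inhabited PropVar] {m : Mo} {h : Set Mo} :
    ¬ M.Sat (Form.bot : Form Ag PVar PConst PropVar) m h := by
  simp [Form.bot, JstitModel.Sat]

theorem sat_bigOr [Inhabited PropVar] {L : List (Form Ag PVar PConst PropVar)}
    {m : Mo} {h : Set Mo} :
    M.Sat (bigOr L) m h ↔ ∃ B ∈ L, M.Sat B m h := by
  induction L with
  | nil => simp [bigOr, sat_bot]
  | cons A L ih =>
    cases L with
    | nil => simp [bigOr]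
    | cons B L => rw [bigOr, sat_or, ih]; simp

theorem cell_eq {m : Mo} {j : Ag} {C C' : Set (Set Mo)} {h : Set Mo} (hC : C ∈ M.choice m j)
    (hC' : C' ∈ M.choice m j) (h1 : h ∈ C) (h2 : h ∈ C') : C = C' :=
  M.choice_disjoint m j C C' hC hC' ⟨h, h1, h2⟩

theorem sound_a3 {p : Ag × Form Ag PVar PConst PropVar}
    {L : List (Ag × Form Ag PVar PConst PropVar)}
    (hnd : ((p :: L).map Prod.fst).Nodup) (m : Mo)
    (hL : ∀ q ∈ p :: L, ∃ h' ∈ M.toTemporalFrame.H m, M.Sat (Form.stit q.1 q.2) m h')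
    (h : Set Mo) (hh : h ∈ M.toTemporalFrame.H m) :
    ∃ h' ∈ M.toTemporalFrame.H m, ∀ q ∈ p :: L, M.Sat (Form.stit q.1 q.2) m h' := by
  have : ∀ j, ∃ C ∈ M.choice m j, ∀ q ∈ p :: L, q.1 = j → ∀ h' ∈ C, M.Sat q.2 m h' := by
    intro j
    by_cases hj : ∃ q ∈ p :: L, q.1 = j
    · obtain ⟨q, hq, rfl⟩ := hj
      obtain ⟨h', hh', hs⟩ := hL q hq
      obtain ⟨C, hC, hC'⟩ := M.choice_cover m q.1 h' hh'
      refine ⟨C, hC, ?_⟩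
      intro q' hq' he h'' hh''
      rw [List.inj_on_of_nodup_map hnd hq' hq he]
      exact hs h'' C hC hC' hh''
    · obtain ⟨C, hC, _⟩ := M.choice_cover m j h hh
      exact ⟨C, hC, fun q hq he => absurd ⟨q, hq, he⟩ hj⟩
  choose f hf1 hf2 using this
  obtain ⟨h0, hh0⟩ := M.independence m f hf1
  rw [Set.mem_iInter] at hh0
  refine ⟨h0, M.choice_cell_sub m p.1 _ (hf1 p.1) (hh0 p.1), ?_⟩
  intro q hq h' C hC a b
  rw [cell_eq M hC (hf1 q.1) a (hh0 q.1)] at b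
  exact hf2 q.1 q hq rfl h' b

theorem sound_ax {A : Form Ag PVar PConst PropVar} (hA : Ax A) : M.Valid A := by
  classical
  intro m h hh
  induction hA with
  | a0 ht =>
    have := ht (fun B => decide (M.Sat B m h)) (by
      intro B C; rw [Bool.eq_iff_iff]; simp only [decide_eq_true_iff, Bool.and_eq_true, Bool.not_eq_true', decide_eq_false_iff_not]; simp only [JstitModel.Sat]) (by
      intro B; rw [Bool.eq_iff_iff]; simp only [decide_eq_true_iff, Bool.and_eq_true, Bool.not_eq_true', decide_eq_false_iff_not]; simp only [JstitModel.Sat])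
    simpa using this
  | boxK => simp only [sat_imp, JstitModel.Sat]; intro a b h' hh'; exact a h' hh' (b h' hh')
  | boxT => simp only [sat_imp, JstitModel.Sat]; intro a; exact a h hh
  | box4 => simp only [sat_imp, JstitModel.Sat]; intro a _ _; exact a
  | box5 => simp only [sat_imp, JstitModel.Sat]; intro a _ _; exact a
  | stitK =>
    simp only [sat_imp, JstitModel.Sat]
    intro a b h' C x y z; exact a h' C x y z (b h' C x y z)
  | @stitT j A =>
    simp only [sat_imp, JstitModel.Sat]; intro a
    obtain ⟨C, hC, hC'⟩ := M.choice_cover m j h hh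
    exact a h C hC hC' hC'
  | stit4 =>
    simp only [sat_imp, JstitModel.Sat]
    intro a h' C x y z h'' C' x' y' z'
    rw [cell_eq M x' x y' z] at z'
    exact a h'' C x y z'
  | stit5 =>
    simp only [sat_imp, JstitModel.Sat]
    intro a h' C x y z b
    apply a
    intro h'' C' x' y' z'
    rw [cell_eq M x' x y' y] at z'
    exact b h'' C x z z'
  | @a2 j A =>
    simp only [sat_imp, JstitModel.Sat]
    intro a h' C x _ z
    exact a h' (M.choice_cell_sub m j C x z)
  | @a3 p L hnd =>
    rw [sat_imp, sat_andList, sat_dia, sat_dia]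
    rintro ⟨a, b⟩
    obtain ⟨h', hh', hs⟩ := sound_a3 M hnd m (by
      intro q hq
      rcases List.mem_cons.1 hq with rfl | hq
      · exact a
      · exact (sat_dia M).1 (b _ (List.mem_map.2 ⟨q, hq, rfl⟩))) h hh
    refine ⟨h', hh', (sat_andList M).2 ⟨hs p (by simp), ?_⟩⟩
    intro B hB
    obtain ⟨q, hq, rfl⟩ := List.mem_map.1 hB
    exact hs q (by simp [hq])
  | a4 =>
    simp only [sat_imp, JstitModel.Sat]
    rintro ⟨a1, a2⟩ ⟨b1, b2⟩
    exact ⟨M.ev_app _ _ _ _ _ a1 b1, fun m' h' x y => a2 m' h' x y (b2 m' h' x y)⟩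
  | a5 =>
    simp only [sat_imp, JstitModel.Sat]
    rintro ⟨a1, a2⟩
    refine ⟨⟨M.ev_bang _ _ _ a1, fun m' h' x y => ⟨M.ev_mono _ _ _ x a1, ?_⟩⟩, ?_⟩
    · intro m'' h'' x' y'
      exact a2 m'' h'' (M.Re_trans x x') y'
    · intro m' h' x y
      exact a2 m' h' (M.R_sub_Re x) y
  | a6 =>
    simp only [sat_imp, sat_or, JstitModel.Sat]
    rintro (⟨a1, a2⟩ | ⟨a1, a2⟩)
    · exact ⟨M.ev_sum_left _ _ _ a1, a2⟩
    · exact ⟨M.ev_sum_right _ _ _ a1, a2⟩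
  | knowK =>
    simp only [sat_imp, JstitModel.Sat]; intro a b m' h' x y; exact a m' h' x y (b m' h' x y)
  | knowT => simp only [sat_imp, JstitModel.Sat]; intro a; exact a m h (M.R_refl _) hh
  | know4 =>
    simp only [sat_imp, JstitModel.Sat]
    intro a m' h' x y m'' h'' x' y'
    exact a m'' h'' (M.R_trans x x') y'
  | a8 =>
    simp only [sat_imp, JstitModel.Sat]
    intro a _ _ m' h' x y h'' y'
    exact a m' h'' x y'
  | a9 =>
    simp only [sat_imp, JstitModel.Sat]
    intro a m' h' x y h'' y'
    exact M.transparent m m' _ (M.R_sub_Re x) a h'' y'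

theorem sound_cs {CS : Set (Form Ag PVar PConst PropVar)} (hCS : IsConstSpec CS)
    (hN : CSNormal CS M) {B : Form Ag PVar PConst PropVar} (hB : ConstIter B) (hm : B ∈ CS) :
    M.Valid B := by
  induction hB with
  | base hA =>
    intro m h hh
    exact ⟨hN _ m _ hm, fun m' h' _ hh' => sound_ax M hA m' h' hh'⟩
  | step hB ih =>
    intro m h hh
    refine ⟨hN _ m _ hm, fun m' h' _ hh' => ih ?_ m' h' hh'⟩
    cases hB with
    | base => exact hCS.2 _ _ _ hm
    | step => exact hCS.2 _ _ _ hm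

theorem sound [Inhabited PropVar] {CS : Set (Form Ag PVar PConst PropVar)} (hCS : IsConstSpec CS)
    (hN : CSNormal CS M) (hreg : M.toJstitFrame.Regular) {A : Form Ag PVar PConst PropVar}
    (hA : Proves CS A) : M.Valid A := by
  induction hA with
  | ax h => exact sound_ax M h
  | mp _ _ ih1 ih2 => intro m h hh; exact (sat_imp M).1 (ih1 m h hh) (ih2 m h hh)
  | nec _ ih => intro m h hh m' h' _ hh'; exact ih m' h' hh'
  | @rd A ts ss hne _ ih =>
    intro m h hh
    rw [sat_imp, sat_bigOr]
    intro hK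
    by_contra hn
    push Not at hn
    refine rd_core M hreg A ts ss ?_ m h hh hK ?_ ?_
    · intro m' h' hh' hK'
      obtain ⟨B, hB, hs⟩ := (sat_bigOr M).1 ((sat_imp M).1 (ih m' h' hh') hK')
      rcases List.mem_append.1 hB with hB | hB
      · obtain ⟨t, ht, rfl⟩ := List.mem_map.1 hB
        exact Or.inl ⟨t, ht, hs⟩
      · obtain ⟨t, ht, rfl⟩ := List.mem_map.1 hB
        exact Or.inr ⟨t, ht, hs⟩
    · intro t ht
      exact not_not.1 (hn _ (List.mem_append_left _ (List.mem_map.2 ⟨t, ht, rfl⟩)))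
    · intro t ht
      exact hn _ (List.mem_append_right _ (List.mem_map.2 ⟨t, ht, rfl⟩))
  | rcs h => exact sound_cs M hCS hN (hCS.1 _ h) h

end Sound

end JCompl

namespace JCompl

section Tree

variable (α : Type)

/-- The full tree over an alphabet: finite words (last letter first) under the suffix order. -/
def TF : TemporalFrame (List α) where
  le := fun a b => a <:+ b
  le_refl := fun _ => List.suffix_rfl
  le_antisymm := fun h1 h2 => h1.eq_of_length (le_antisymm h1.length_le h2.length_le)
  le_trans := fun h1 h2 => h1.trans h2
  nonempty := ⟨[]⟩
  hist_conn := fun _ _ => ⟨[], List.nil_suffix, List.nil_suffix⟩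
  no_backward := fun _ _ _ h1 h2 => List.suffix_or_suffix_of_suffix h1 h2

variable {α}

theorem tf_lt_cons (a : α) (m : List α) : (TF α).lt m (a :: m) :=
  ⟨List.suffix_cons a m, by intro h; have := congrArg List.length h; simp at this⟩

theorem tf_lt_next {m m1 : List α} (h : (TF α).lt m m1) : ∃ a, a :: m <:+ m1 := by
  obtain ⟨⟨l, rfl⟩, h2⟩ := h
  rcases List.eq_nil_or_concat l with rfl | ⟨l', a, rfl⟩
  · simp at h2
  · exact ⟨a, l', by simp⟩

theorem tf_next (a : α) (m : List α) : (TF α).Next m (a :: m) := by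
  refine ⟨tf_lt_cons a m, ?_⟩
  rintro m'' ⟨h1, h2⟩
  exact (List.suffix_cons_iff.1 h1).resolve_left h2

variable [Nonempty α]

theorem tf_ex {h : Set (List α)} {m : List α} (hh : h ∈ (TF α).H m) : ∃ a, a :: m ∈ h := by
  by_cases hx : ∃ m1 ∈ h, (TF α).lt m m1
  · obtain ⟨m1, h1, h2⟩ := hx
    obtain ⟨a, ha⟩ := tf_lt_next h2
    exact ⟨a, hist_down hh.1 h1 ha⟩
  · push Not at hx
    obtain ⟨a⟩ := ‹Nonempty α›
    refine ⟨a, hist_mem hh.1 fun x hxh => Or.inr ?_⟩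
    have hxm : x <:+ m := by
      rcases hist_total hh.1 hh.2 hxh with h1 | h1
      · by_cases he : m = x
        · rw [he]
        · exact absurd ⟨h1, he⟩ (hx x hxh)
      · exact h1
    exact hxm.trans (List.suffix_cons a m)

/-- The letter that the history `h` picks at `m`. -/
noncomputable def nx (h : Set (List α)) (m : List α) : α := Classical.epsilon fun a => a :: m ∈ h

theorem nx_mem {h : Set (List α)} {m : List α} (hh : h ∈ (TF α).H m) : nx h m :: m ∈ h :=
  Classical.epsilon_spec (tf_ex hh)

theorem nx_eq {h : Set (List α)} {m : List α} (hh : h ∈ (TF α).H m) {a : α} (ha : a :: m ∈ h) :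
    nx h m = a := by
  have := hist_total hh.1 (nx_mem hh) ha
  rcases this with h1 | h1
  · have := List.IsSuffix.eq_of_length h1 (by simp)
    simpa using this
  · have := List.IsSuffix.eq_of_length h1 (by simp)
    simpa using this.symm

theorem nx_undiv {h g : Set (List α)} {m : List α} (hh : h ∈ (TF α).H m) (hg : g ∈ (TF α).H m)
    (hu : (TF α).Undiv m h g) : nx h m = nx g m := by
  obtain ⟨m', h1, h2, h3⟩ := hu
  obtain ⟨a, ha⟩ := tf_lt_next h1
  rw [nx_eq hh (hist_down hh.1 h2 ha), nx_eq hg (hist_down hg.1 h3 ha)]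

theorem tf_hist (m : List α) (a : α) : ∃ h ∈ (TF α).H m, nx h m = a := by
  have hc : IsChain (TF α).le {x | x <:+ a :: m} := by
    intro x hx y hy _
    exact List.suffix_or_suffix_of_suffix hx hy
  obtain ⟨h, hm, hs⟩ := hc.exists_maxChain
  have hh : (TF α).IsHistory h := ⟨hm.1, fun h' h1 h2 => (hm.2 h1 h2).symm⟩
  have ha : a :: m ∈ h := hs List.suffix_rfl
  have hH : h ∈ (TF α).H m := ⟨hh, hist_down hh ha (List.suffix_cons a m)⟩
  exact ⟨h, hH, nx_eq hH ha⟩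

end Tree

section Canon

variable {Ag PVar PConst PropVar : Type} [Inhabited PropVar]
  (CS : Set (Form Ag PVar PConst PropVar))

/-- States of the canonical tree. -/
inductive St : Type
  | root : St
  | dead : St
  | live : W CS → St

variable {CS}

open Classical in
/-- Effective maximal consistent set picked by a letter. -/
noncomputable def eff (w : W CS) : Option (W CS) → W CS
  | none => w
  | some v => if Eqv w v then v else w

theorem eff_eqv (w : W CS) (o : Option (W CS)) : Eqv w (eff w o) := by
  cases o with
  | none => exact fun _ => Iff.rfl
  | some v =>
    simp only [eff]
    split_ifs with h
    · exact h
    · exact fun _ => Iff.rfl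

theorem eff_some {w v : W CS} (h : Eqv w v) : eff w (some v) = v := by simp [eff, h]

/-- Successor. -/
noncomputable def sc (w : W CS) : W CS := (succ_ex w).choose

theorem sc_rk (w : W CS) : RK w (sc w) := (succ_ex w).choose_spec.1

theorem sc_ann (w : W CS) (t : Pol PVar PConst) :
    Form.box (Form.ann t) ∈ sc w ↔ Form.ann t ∈ w := (succ_ex w).choose_spec.2 t

/-- One step. -/
noncomputable def stepS : St CS → Option (W CS) → St CS
  | St.root, none => St.dead
  | St.root, some w => St.live w
  | St.dead, _ => St.dead
  | St.live w, o => St.live (sc (eff w o))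

/-- State reached by a word. -/
noncomputable def st : List (Option (W CS)) → St CS
  | [] => St.root
  | o :: m => stepS (st m) o

/-- Announcements. -/
def actS : St CS → Option (W CS) → Set (Pol PVar PConst)
  | St.root, none => ∅
  | St.root, some w => {t | Form.box (Form.ann t) ∈ w}
  | St.dead, _ => ∅
  | St.live w, o => {t | Form.ann t ∈ eff w o}

/-- Choice equivalence on letters. -/
def simS (j : Ag) : St CS → Option (W CS) → Option (W CS) → Prop
  | St.live w, a, b => Sim j (eff w a) (eff w b)
  | _, _, _ => True

/-- Accessibility on states. -/
def rS : St CS → St CS → Prop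
  | St.root, _ => True
  | St.dead, St.dead => True
  | St.live w, St.live v => RK w v
  | _, _ => False

/-- Evidence on states. -/
def evS : St CS → Pol PVar PConst → Set (Form Ag PVar PConst PropVar)
  | St.root, t => {A | ∀ w : W CS, Form.proves t A ∈ w}
  | St.dead, _ => Set.univ
  | St.live w, t => {A | Form.proves t A ∈ w}

theorem rS_refl (s : St CS) : rS s s := by
  cases s <;> simp [rS, RK]

theorem rS_trans {a b c : St CS} (h1 : rS a b) (h2 : rS b c) : rS a c := by
  cases a <;> cases b <;> cases c <;> simp_all [rS, RK]

theorem rS_step (m : List (Option (W CS))) (o : Option (W CS)) : rS (st m) (st (o :: m)) := by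
  rw [st]
  cases st m with
  | root => cases o <;> simp [rS]
  | dead => simp [rS, stepS]
  | live w => exact fun A hA => sc_rk _ _ ((eff_eqv w o).know hA)

theorem rS_le {m m' : List (Option (W CS))} (h : m <:+ m') : rS (st m) (st m') := by
  obtain ⟨l, rfl⟩ := h
  induction l with
  | nil => exact rS_refl _
  | cons o l ih => exact rS_trans ih (rS_step _ _)

theorem act_step (m : List (Option (W CS))) (o : Option (W CS)) (t : Pol PVar PConst) :
    t ∈ actS (st m) o ↔ ∀ o', t ∈ actS (st (o :: m)) o' := by
  have box : ∀ v : W CS, Form.box (Form.ann t) ∈ v ↔ ∀ o', Form.ann t ∈ eff v o' := by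
    intro v
    constructor
    · intro h o'
      exact mem_ax Ax.boxT ((eff_eqv v o' _).1 h)
    · intro h
      by_contra hn
      obtain ⟨u, h1, h2⟩ := box_ex hn
      have := h (some u)
      rw [eff_some h1] at this
      exact h2 this
  rw [st]
  cases st m with
  | root =>
    cases o with
    | none => simp [actS, stepS]
    | some w => exact box w
  | dead => simp [actS, stepS]
  | live w =>
    refine Iff.trans ?_ (box _)
    exact (sc_ann _ t).symm

/-- The canonical frame. -/
noncomputable def CF [Finite Ag] : JstitFrame (List (Option (W CS))) Ag where
  toTemporalFrame := TF (Option (W CS))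
  choice := fun m j => {C | ∃ a, C = {h | h ∈ (TF (Option (W CS))).H m ∧
    simS j (st m) a (nx h m)}}
  choice_cell_nonempty := by
    rintro m j C ⟨a, rfl⟩
    obtain ⟨h, hh, hn⟩ := tf_hist m a
    refine ⟨h, hh, ?_⟩
    rw [hn]
    cases st m <;> simp [simS, Sim]
  choice_cell_sub := by
    rintro m j C ⟨a, rfl⟩ h hh
    exact hh.1
  choice_cover := by
    intro m j h hh
    refine ⟨_, ⟨nx h m, rfl⟩, hh, ?_⟩
    cases st m <;> simp [simS, Sim]
  choice_disjoint := by
    rintro m j C C' ⟨a, rfl⟩ ⟨b, rfl⟩ ⟨h, ⟨_, h1⟩, ⟨_, h2⟩⟩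
    ext g
    simp only [Set.mem_ofPred_eq, and_congr_right_iff]
    intro _
    cases hs : st m with
    | root => simp [simS]
    | dead => simp [simS]
    | live w =>
      rw [hs] at h1 h2
      simp only [simS] at h1 h2 ⊢
      constructor
      · intro h3 A; rw [h2 A, ← h1 A, h3 A]
      · intro h3 A; rw [h1 A, ← h2 A, h3 A]
  no_choice_undiv := by
    rintro m j h h' hh hh' hu C ⟨a, rfl⟩ hC
    refine ⟨hh', ?_⟩
    rw [← nx_undiv hh hh' hu]
    exact hC.2
  independence := by
    intro m f hf
    choose a ha using hf
    have : ∃ b, ∀ j, simS j (st m) (a j) b := by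
      cases hs : st m with
      | root => exact ⟨none, fun j => trivial⟩
      | dead => exact ⟨none, fun j => trivial⟩
      | live w =>
        obtain ⟨v, h1, h2⟩ := indep_ex w (fun j => eff w (a j)) (fun j => eff_eqv _ _)
        refine ⟨some v, fun j => ?_⟩
        simp only [simS, eff_some h1]
        exact h2 j
    obtain ⟨b, hb⟩ := this
    obtain ⟨h, hh, hn⟩ := tf_hist m b
    refine ⟨h, Set.mem_iInter.2 fun j => ?_⟩
    rw [ha j]
    refine ⟨hh, ?_⟩
    rw [hn]
    exact hb j
  R := fun m m' => rS (st m) (st m')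
  Re := fun m m' => rS (st m) (st m')
  R_refl := fun _ => rS_refl _
  R_trans := rS_trans
  Re_refl := fun _ => rS_refl _
  Re_trans := rS_trans
  R_sub_Re := id
  le_sub_R := rS_le

theorem CF_regular [Finite Ag] : (CF (CS := CS)).Regular := by
  intro m m1 hl _
  obtain ⟨a, ha⟩ := tf_lt_next hl
  exact ⟨a :: m, ha, tf_next a m⟩

/-- The canonical model. -/
noncomputable def CM [Finite Ag] :
    JstitModel (List (Option (W CS))) Ag PVar PConst PropVar where
  toJstitFrame := CF
  act := fun m h => actS (st m) (nx h m)
  ev := fun m t => evS (st m) t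
  val := fun p => {x | ∃ w, st x.1 = St.live w ∧ Form.pv p ∈ eff w (nx x.2 x.1)}
  ev_mono := by
    intro m m' t hR A hA
    change rS (st m) (st m') at hR
    revert hA
    revert hR
    cases st m <;> cases st m' <;> simp only [rS, evS] <;> intro hR hA
    · exact hA
    · trivial
    · exact hA _
    · exact hR.elim
    · trivial
    · exact hR.elim
    · exact hR.elim
    · exact hR.elim
    · exact hR.proves hA
  ev_app := by
    intro m s t A B
    cases st m with
    | root => exact fun h1 h2 w => mem_imp.1 (mem_ax Ax.a4 (h1 w)) (h2 w)
    | dead => exact fun _ _ => trivial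
    | live w => exact fun h1 h2 => mem_imp.1 (mem_ax Ax.a4 h1) h2
  ev_sum_left := by
    intro m s t A
    cases st m with
    | root => exact fun h1 w => mem_ax Ax.a6 (mem_or.2 (Or.inl (h1 w)))
    | dead => exact fun _ => trivial
    | live w => exact fun h1 => mem_ax Ax.a6 (mem_or.2 (Or.inl h1))
  ev_sum_right := by
    intro m s t A
    cases st m with
    | root => exact fun h1 w => mem_ax Ax.a6 (mem_or.2 (Or.inr (h1 w)))
    | dead => exact fun _ => trivial
    | live w => exact fun h1 => mem_ax Ax.a6 (mem_or.2 (Or.inr h1))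
  ev_bang := by
    intro m t A
    cases st m with
    | root => exact fun h1 w => (mem_and.1 (mem_ax Ax.a5 (h1 w))).1
    | dead => exact fun _ => trivial
    | live w => exact fun h1 => (mem_and.1 (mem_ax Ax.a5 h1)).1
  expansion := by
    intro m m' h hl hh t ht
    have hs : m' <:+ m := hl.1
    clear hl
    obtain ⟨l, rfl⟩ := hs
    induction l with
    | nil => exact ht
    | cons o l ih =>
      have hle : (TF (Option (W CS))).le (l ++ m') (o :: (l ++ m')) := List.suffix_cons _ _
      have hh' : h ∈ (TF (Option (W CS))).H (l ++ m') := H_down hh hle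
      have h1 := ih hh'
      have h2 : nx h (l ++ m') = o := nx_eq hh' hh.2
      rw [h2] at h1
      exact (act_step _ _ _).1 h1 _
  no_new := by
    intro m t ht
    have ht' : ∀ o, t ∈ actS (st m) o := by
      intro o
      obtain ⟨h, hh, hn⟩ := tf_hist m o
      have := ht h hh
      rwa [hn] at this
    cases m with
    | nil => exact absurd (ht' none) (by simp [st, actS])
    | cons o m =>
      obtain ⟨h, hh, -⟩ := tf_hist (o :: m) o
      refine ⟨m, h, tf_lt_cons o m, hh, ?_⟩
      have hle : (TF (Option (W CS))).le m (o :: m) := List.suffix_cons _ _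
      rw [nx_eq (H_down hh hle) hh.2]
      exact (act_step _ _ _).2 ht'
  divide := by
    intro m h h' hh hh' hu
    rw [nx_undiv hh hh' hu]
  transparent := by
    intro m m' t hR ht h' hh'
    have ht' : ∀ o, t ∈ actS (st m) o := by
      intro o
      obtain ⟨h, hh, hn⟩ := tf_hist m o
      have := ht h hh
      rwa [hn] at this
    change rS (st m) (st m') at hR
    generalize nx h' m' = o
    revert ht'
    revert hR
    cases st m with
    | root => exact fun _ h => absurd (h none) (by simp [actS])
    | dead => exact fun _ h => absurd (h none) (by simp [actS])
    | live w =>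
      cases st m' with
      | root => exact fun h => h.elim
      | dead => exact fun h => h.elim
      | live v =>
        intro hR h
        have hb : Form.box (Form.ann t) ∈ w := by
          by_contra hn
          obtain ⟨u, h1, h2⟩ := box_ex hn
          have := h (some u)
          simp only [actS, eff_some h1] at this
          exact h2 this
        have := mem_ax Ax.knowT (hR _ (mem_ax Ax.a9 hb))
        exact mem_ax Ax.boxT ((eff_eqv v o _).1 this)

theorem CM_normal [Finite Ag] : CSNormal CS (CM (CS := CS)) := by
  intro c m A hA
  change A ∈ evS (st m) _
  cases st m with
  | root => exact fun w => mem_thm (Proves.rcs hA)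
  | dead => trivial
  | live w => exact mem_thm (Proves.rcs hA)

theorem know_access {w v : W CS} {A : Form Ag PVar PConst PropVar} {a b : Option (W CS)}
    (hA : Form.know A ∈ eff w a) (hR : RK w v) : A ∈ eff v b :=
  mem_ax Ax.knowT ((eff_eqv v b).know (hR _ ((eff_eqv w a).symm.know hA)))

theorem truth [Finite Ag] (A : Form Ag PVar PConst PropVar) :
    ∀ (m : List (Option (W CS))) (w : W CS), st m = St.live w →
    ∀ h ∈ (TF (Option (W CS))).H m, ((CM (CS := CS)).Sat A m h ↔ A ∈ eff w (nx h m)) := by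
  induction A with
  | pv p =>
    intro m w hw h hh
    constructor
    · rintro ⟨w', h1, h2⟩
      rw [hw] at h1
      cases h1
      exact h2
    · intro h1
      exact ⟨w, hw, h1⟩
  | and A B ihA ihB =>
    intro m w hw h hh
    rw [mem_and, ← ihA m w hw h hh, ← ihB m w hw h hh]
    rfl
  | neg A ih =>
    intro m w hw h hh
    rw [mem_neg, ← ih m w hw h hh]
    rfl
  | stit j A ih =>
    intro m w hw h hh
    constructor
    · intro hs
      by_contra hn
      obtain ⟨v, h1, h2, h3⟩ := stit_ex hn
      have hwv : Eqv w v := fun B => (eff_eqv w _ B).trans (h1 B)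
      obtain ⟨g, hg, hng⟩ := tf_hist m (some v)
      have := hs g {g | g ∈ (TF (Option (W CS))).H m ∧ simS j (st m) (nx h m) (nx g m)}
        ⟨nx h m, rfl⟩ ⟨hh, by rw [hw]; simp [simS, Sim]⟩
        ⟨hg, by rw [hw, hng]; simp only [simS, eff_some hwv]; exact h2⟩
      rw [ih m w hw g hg, hng, eff_some hwv] at this
      exact h3 this
    · rintro hs g C ⟨a, rfl⟩ ⟨_, h1⟩ ⟨hg, h2⟩
      rw [ih m w hw g hg]
      rw [hw] at h1 h2
      exact mem_ax Ax.stitT ((h2 A).1 ((h1 A).2 hs))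
  | box A ih =>
    intro m w hw h hh
    constructor
    · intro hs
      by_contra hn
      obtain ⟨v, h1, h2⟩ := box_ex hn
      have hwv : Eqv w v := fun B => (eff_eqv w _ B).trans (h1 B)
      obtain ⟨g, hg, hng⟩ := tf_hist m (some v)
      have := hs g hg
      rw [ih m w hw g hg, hng, eff_some hwv] at this
      exact h2 this
    · intro hs g hg
      rw [ih m w hw g hg]
      exact mem_ax Ax.boxT ((eff_eqv w _ A).1 ((eff_eqv w _ A).2 hs))
  | proves t A ih =>
    intro m w hw h hh
    have hev : A ∈ evS (st m) t ↔ Form.proves t A ∈ eff w (nx h m) := by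
      rw [hw]
      exact ⟨fun h => (eff_eqv w _).rk.proves h, fun h => (eff_eqv w _).symm.rk.proves h⟩
    constructor
    · intro hs
      exact hev.1 hs.1
    · intro hs
      refine ⟨hev.2 hs, fun m' g hR hg => ?_⟩
      change rS (st m) (st m') at hR
      cases hs' : st m' with
      | root => rw [hw, hs'] at hR; exact hR.elim
      | dead => rw [hw, hs'] at hR; exact hR.elim
      | live v =>
        rw [hw, hs'] at hR
        rw [ih m' v hs' g hg]
        exact know_access (mem_and.1 (mem_ax Ax.a5 hs)).2 hR
  | know A ih =>
    intro m w hw h hh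
    constructor
    · intro hs
      by_contra hn
      obtain ⟨v, h1, h2⟩ := know_ex hn
      obtain ⟨g, hg, hng⟩ := tf_hist [some v] (some v)
      have hst : st [some v] = St.live v := rfl
      have := hs [some v] g (by
        change rS (st m) (st [some v])
        rw [hw, hst]
        exact fun B hB => h1 B ((eff_eqv w _).know hB)) hg
      rw [ih _ v hst g hg, hng, eff_some (fun _ => Iff.rfl)] at this
      exact h2 this
    · intro hs m' g hR hg
      change rS (st m) (st m') at hR
      cases hs' : st m' with
      | root => rw [hw, hs'] at hR; exact hR.elim
      | dead => rw [hw, hs'] at hR; exact hR.elim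
      | live v =>
        rw [hw, hs'] at hR
        rw [ih m' v hs' g hg]
        exact know_access hs hR
  | ann t =>
    intro m w hw h hh
    change t ∈ actS (st m) (nx h m) ↔ _
    rw [hw]
    rfl

end Canon

end JCompl

/-- Theorem 6: for any class 𝓕 of jstit frames for Ag squeezed between
the unirelational regular frames and the regular frames, Γ is CS-consistent iff Γ is
satisfiable in the class of CS-normal jstit models based on frames from 𝓕. -/
theorem stmt14 {Ag PVar PConst PropVar : Type} [Finite Ag]
    [Countable PVar] [Infinite PVar] [Countable PConst] [Infinite PConst]
    [Countable PropVar] [Infinite PropVar] [Inhabited PropVar]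
    (CS : Set (Form Ag PVar PConst PropVar)) (hCS : IsConstSpec CS)
    (Γ : Set (Form Ag PVar PConst PropVar))
    (𝓕 : ∀ Mo : Type, JstitFrame Mo Ag → Prop)
    (hlow : ∀ (Mo : Type) (F : JstitFrame Mo Ag),
      F.Regular → F.Unirelational → 𝓕 Mo F)
    (hhigh : ∀ (Mo : Type) (F : JstitFrame Mo Ag), 𝓕 Mo F → F.Regular) :
    CSConsistent CS Γ ↔
      ∃ (Mo : Type) (M : JstitModel Mo Ag PVar PConst PropVar),
        𝓕 Mo M.toJstitFrame ∧ CSNormal CS M ∧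
        ∃ m h, h ∈ M.toTemporalFrame.H m ∧ ∀ A ∈ Γ, M.Sat A m h := by
  constructor
  · intro hcon
    refine ⟨_, JCompl.CM (CS := CS), hlow _ _ JCompl.CF_regular (fun _ _ h => h),
      JCompl.CM_normal, ?_⟩
    rcases Γ.eq_empty_or_nonempty with rfl | ⟨A0, hA0⟩
    · obtain ⟨h, hh, -⟩ := JCompl.tf_hist ([] : List (Option (JCompl.W CS))) none
      exact ⟨[], h, hh, by simp⟩
    · obtain ⟨w, hw⟩ := JCompl.lindenbaum (CS := CS) (Γ := Γ) (by
        intro L hL hp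
        refine hcon ⟨A0, L, hA0, hL, JCompl.proves_of fun w => ?_⟩
        rw [JCompl.mem_imp, JCompl.mem_andList]
        rintro ⟨-, h⟩
        exact absurd (JCompl.mem_conj.2 h) (JCompl.mem_neg.1 (JCompl.mem_thm hp)))
      obtain ⟨h, hh, hn⟩ := JCompl.tf_hist [some w] (some w)
      refine ⟨[some w], h, hh, fun A hA => ?_⟩
      rw [JCompl.truth A [some w] w rfl h hh, hn, JCompl.eff_some (fun _ => Iff.rfl)]
      exact hw A hA
  · rintro ⟨Mo, M, hF, hN, m, h, hh, hsat⟩ ⟨A, L, hA, hL, hp⟩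
    have := JCompl.sound M hCS hN (hhigh _ _ hF) hp m h hh
    rw [JCompl.sat_imp, JCompl.sat_andList] at this
    exact JCompl.sat_bot M (this ⟨hsat A hA, fun B hB => hsat B (hL B hB)⟩)
end
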